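/- arXiv:2501.03834 — 2 statements merged into one kernel-verified Lean document; each statement's English description precedes it below -/
import Mathlib

section
/- For any two interior-disjoint horizontal-greedy δ-matchings π and π' (possibly with different starting points), we have |C(π) ∩ C(π')| ≤ 1 or |R(π) ∩ R(π')| ≤ 1. -/
open Set

noncomputable section

/-- `R : [1, n] → ℝ` is a one-dimensional polygonal curve with vertices
`R 1, …, R n`: it is affine on each interval `[k, k+1]`. -/
def IsPoly1D (R : ℝ → ℝ) (n : ℕ) : Prop :=
  ∀ k : ℕ, 1 ≤ k → k < n → ∀ x ∈ Icc (k : ℝ) ((k : ℝ) + 1),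
    R x = R (k : ℝ) + (x - (k : ℝ)) * (R ((k : ℝ) + 1) - R (k : ℝ))

/-- General position: the vertex values are pairwise distinct. -/
def GeneralPosition (R : ℝ → ℝ) (n : ℕ) : Prop :=
  ∀ k l : ℕ, 1 ≤ k → k ≤ n → 1 ≤ l → l ≤ n → k ≠ l → R (k : ℝ) ≠ R (l : ℝ)

/-- The `δ`-free space `F_δ = {(x,y) ∈ [1,n] × [1,m] : B y − R x ≤ δ}`. -/
def freeSpace (R B : ℝ → ℝ) (n m : ℕ) (δ : ℝ) : Set (ℝ × ℝ) :=
  {p : ℝ × ℝ | p.1 ∈ Icc (1:ℝ) (n : ℝ) ∧ p.2 ∈ Icc (1:ℝ) (m : ℝ) ∧ B p.2 - R p.1 ≤ δ}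

/-- `A i'` is a prefix-minimum of `A[i, ∞)`: `|A i'| ≤ |A x|` for all `x ∈ [i, i']`. -/
def PrefixMin (A : ℝ → ℝ) (i i' : ℤ) : Prop :=
  i ≤ i' ∧ ∀ x ∈ Icc (i : ℝ) (i' : ℝ), |A (i' : ℝ)| ≤ |A x|

/-- A rectilinear path, given by its sequence of vertices (endpoints and
turning points). -/
structure RectPath where
  N : ℕ
  vert : Fin (N + 1) → ℝ × ℝ

/-- The last vertex (endpoint) of a rectilinear path. -/
def RectPath.last (π : RectPath) : ℝ × ℝ := π.vert (Fin.last π.N)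

/-- The image of a rectilinear path: the union of the segments between
consecutive vertices. -/
def RectPath.image (π : RectPath) : Set (ℝ × ℝ) :=
  insert (π.vert 0) (⋃ k : Fin π.N, segment ℝ (π.vert k.castSucc) (π.vert k.succ))

/-- Each edge of the path is an axis-parallel segment, and the path is
nondecreasing in both coordinates. -/
def RectPath.IsRectilinear (π : RectPath) : Prop :=
  ∀ k : Fin π.N,
    ((π.vert k.castSucc).1 = (π.vert k.succ).1 ∧ (π.vert k.castSucc).2 < (π.vert k.succ).2) ∨
    ((π.vert k.castSucc).2 = (π.vert k.succ).2 ∧ (π.vert k.castSucc).1 < (π.vert k.succ).1)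

/-- A prefix-minima `δ`-matching starting at the integer point `s = (i, j)`:
a monotone rectilinear path inside the `δ`-free space starting at `s`, all of
whose vertices are integer points `(i', j')` with `R i'` a prefix-minimum of
`R[i, n]` and `B j'` a prefix-minimum of `B[j, m]`. -/
def IsPMMatching (R B : ℝ → ℝ) (n m : ℕ) (δ : ℝ) (s : ℤ × ℤ) (π : RectPath) : Prop :=
  π.IsRectilinear ∧
  π.vert 0 = ((s.1 : ℝ), (s.2 : ℝ)) ∧
  π.image ⊆ freeSpace R B n m δ ∧
  ∀ k : Fin (π.N + 1), ∃ i' j' : ℤ,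
    π.vert k = ((i' : ℝ), (j' : ℝ)) ∧ PrefixMin R s.1 i' ∧ PrefixMin B s.2 j'

/-- A horizontal-greedy `δ`-matching starting at `s`: a prefix-minima
`δ`-matching that, from any integer prefix-minima point `(i', j')` on it, either
traverses any available horizontal free-space segment `[i', î] × {j'}` towards a
further prefix-minimum `R î`, or terminates at `(i', j')`. -/
def IsHorizGreedy (R B : ℝ → ℝ) (n m : ℕ) (δ : ℝ) (s : ℤ × ℤ) (π : RectPath) : Prop :=
  IsPMMatching R B n m δ s π ∧
  ∀ i' j' : ℤ, ((i' : ℝ), (j' : ℝ)) ∈ π.image →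
    PrefixMin R s.1 i' → PrefixMin B s.2 j' →
    ∀ ihat : ℤ, i' < ihat → PrefixMin R s.1 ihat →
      (Icc (i' : ℝ) (ihat : ℝ) ×ˢ ({(j' : ℝ)} : Set ℝ) ⊆ freeSpace R B n m δ) →
      (Icc (i' : ℝ) (ihat : ℝ) ×ˢ ({(j' : ℝ)} : Set ℝ) ⊆ π.image ∨
        π.last = ((i' : ℝ), (j' : ℝ)))

/-- `C(π)`: the set of integers `i` such that `π` has a vertical edge contained
in the line `x = i`. -/
def vertLines (π : RectPath) : Set ℤ :=
  {i : ℤ | ∃ k : Fin π.N, (π.vert k.castSucc).1 = (i : ℝ) ∧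
    (π.vert k.castSucc).1 = (π.vert k.succ).1}

/-- `R(π)`: the set of integers `j` such that `π` has a horizontal edge contained
in the line `y = j`. -/
def horizLines (π : RectPath) : Set ℤ :=
  {j : ℤ | ∃ k : Fin π.N, (π.vert k.castSucc).2 = (j : ℝ) ∧
    (π.vert k.castSucc).2 = (π.vert k.succ).2}

/-- Two paths are interior-disjoint if their images share no point that is, for
both paths, distinct from that path's two endpoints. -/
def InteriorDisjoint (π π' : RectPath) : Prop :=
  ∀ p ∈ π.image ∩ π'.image,
    (p = π.vert 0 ∨ p = π.last) ∨ (p = π'.vert 0 ∨ p = π'.last)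

/-- A horizontal-greedy `δ`-matching starting at `s` is maximal if it is not a
proper initial portion of another horizontal-greedy `δ`-matching starting at `s`. -/
def IsMaximalHG (R B : ℝ → ℝ) (n m : ℕ) (δ : ℝ) (s : ℤ × ℤ) (π : RectPath) : Prop :=
  IsHorizGreedy R B n m δ s π ∧
  ∀ π' : RectPath, IsHorizGreedy R B n m δ s π' → π.image ⊆ π'.image →
    π'.image = π.image

/-!
Between two vertical lines `i₁ < i₂` of a greedy matching `π`, let `z` maximise `|R|` over
`[i₁, i₂]`. A row is free over all of `[i₁, i₂]` exactly when it is free at `z`, so greediness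
forces `π` to run from column `z` to `i₂` along the first row, from its start on, that is free at
`z`. If `π'` shares both vertical lines and starts no lower than `π`, the same holds for `π'` and
its own start. The two rows differ by disjointness, so the one of `π` lies below the start of `π'`.

Hence `π` meets a row `j` used by both matchings only from `i₂` on. A row whose value is a
prefix-minimum of `B` is free over every column its matching has met on the way there. So if `π'`
enters row `j` before `i₂`, then `j` is already its crossing row. Either way both matchings pass
through row `j` at or after `i₂`, and the one that does so further to the left is driven by
greediness onto the edge of the other.
-/

section PolygonalCurves

variable {A : ℝ → ℝ} {n : ℕ} {a b i k : ℤ}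

theorem IsPoly1D.min_le (hA : IsPoly1D A n) (hk : 1 ≤ k) (hkn : k < n) {x : ℝ}
    (hx : x ∈ Icc (k : ℝ) (k + 1)) : min (A k) (A (k + 1)) ≤ A x := by
  lift k to ℕ using by omega
  rw [Int.cast_natCast] at hx ⊢
  have hA_eq := hA k (by omega) (by omega) x hx
  set t := x - k
  have ht : 0 ≤ t := sub_nonneg.2 hx.1
  have ht' : 0 ≤ 1 - t := by linarith [hx.2]
  calc
    min (A k) (A (k + 1)) = (1 - t) * min (A k) (A (k + 1)) + t * min (A k) (A (k + 1)) := by ring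
    _ ≤ (1 - t) * A k + t * A (k + 1) := by
      gcongr
      exacts [min_le_left _ _, min_le_right _ _]
    _ = A x := by rw [hA_eq]; ring

theorem IsPoly1D.le_of_forall_int_le (hA : IsPoly1D A n) (ha : 1 ≤ a) (hb : b ≤ n) {c : ℝ}
    (hc : ∀ k ∈ Icc a b, c ≤ A k) {x : ℝ} (hx : x ∈ Icc (a : ℝ) b) : c ≤ A x := by
  have ha_floor : a ≤ ⌊x⌋ := Int.le_floor.2 hx.1
  rcases (Int.floor_le_iff.2 (hx.2.trans_lt (lt_add_one _)) : ⌊x⌋ ≤ b).eq_or_lt with h | h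
  · have hxb : x = b := hx.2.antisymm (h ▸ Int.floor_le x)
    exact hxb ▸ hc b ⟨by omega, le_rfl⟩
  · have hc_succ := hc (⌊x⌋ + 1) ⟨by omega, by omega⟩
    push_cast at hc_succ
    exact (le_min (hc ⌊x⌋ ⟨ha_floor, h.le⟩) hc_succ).trans
      (hA.min_le (ha.trans ha_floor) (by omega) ⟨Int.floor_le x, (Int.lt_floor_add_one x).le⟩)

theorem IsPoly1D.exists_int_min (hA : IsPoly1D A n) (ha : 1 ≤ a) (hb : b ≤ n) (hab : a < b)
    (hAab : A a ≤ A b) : ∃ z ∈ Ico a b, ∀ x ∈ Icc (a : ℝ) b, A z ≤ A x := by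
  obtain ⟨z, hz, hmin⟩ := (finite_Ico a b).exists_minimalFor (fun k : ℤ => A k) _ ⟨a, le_rfl, hab⟩
  have hmin' : ∀ k ∈ Ico a b, A z ≤ A k := fun k hk =>
    (le_total (A z) (A k)).elim id (hmin hk)
  refine ⟨z, hz, fun x => hA.le_of_forall_int_le ha hb fun k hk => ?_⟩
  rcases hk.2.eq_or_lt with rfl | hkb
  · exact (hmin' a ⟨le_rfl, hab⟩).trans hAab
  · exact hmin' k ⟨hk.1, hkb⟩

theorem PrefixMin.le_of_nonneg (h : PrefixMin A i k) (hA : ∀ x ∈ Icc (i : ℝ) k, 0 ≤ A x) {x : ℝ}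
    (hx : x ∈ Icc (i : ℝ) k) : A k ≤ A x := by
  have hk : (k : ℝ) ∈ Icc (i : ℝ) k := ⟨Int.cast_le.2 h.1, le_rfl⟩
  simpa only [abs_of_nonneg (hA k hk), abs_of_nonneg (hA x hx)] using h.2 x hx

theorem PrefixMin.le_of_nonpos (h : PrefixMin A i k) (hA : ∀ x ∈ Icc (i : ℝ) k, A x ≤ 0) {x : ℝ}
    (hx : x ∈ Icc (i : ℝ) k) : A x ≤ A k := by
  have hk : (k : ℝ) ∈ Icc (i : ℝ) k := ⟨Int.cast_le.2 h.1, le_rfl⟩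
  simpa only [abs_of_nonpos (hA k hk), abs_of_nonpos (hA x hx), neg_le_neg_iff] using h.2 x hx

theorem PrefixMin.trans (hk : PrefixMin A i k) (hb : PrefixMin A a b) (hak : a ≤ k) (hkb : k ≤ b) :
    PrefixMin A i b := by
  have hak' : (a : ℝ) ≤ k := Int.cast_le.2 hak
  have hkb' : (k : ℝ) ≤ b := Int.cast_le.2 hkb
  refine ⟨hk.1.trans hkb, fun x hx => ?_⟩
  rcases le_total x k with h | h
  · exact (hb.2 k ⟨hak', hkb'⟩).trans (hk.2 x ⟨hx.1, h⟩)
  · exact hb.2 x ⟨hak'.trans h, hx.2⟩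

end PolygonalCurves

/-- The integer rows `k ≥ j` with `B k ≤ c`. For `c = δ + R x` these are the rows from `j` on whose
crossing with column `x` is free. -/
def lowRows (B : ℝ → ℝ) (j : ℤ) (c : ℝ) : Set ℤ :=
  {k | j ≤ k ∧ B k ≤ c}

section LowRows

variable {B : ℝ → ℝ} {j j' y y' : ℤ} {c : ℝ}

theorem exists_isLeast_lowRows (h : (lowRows B j c).Nonempty) :
    ∃ y, IsLeast (lowRows B j c) y := by
  obtain ⟨y, hy, hmin⟩ := Int.exists_least_of_bdd ⟨j, fun _ hk => hk.1⟩ h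
  exact ⟨y, hy, hmin⟩

theorem eq_or_lt_of_isLeast_lowRows (hj : j ≤ j') (hy : IsLeast (lowRows B j c) y)
    (hy' : IsLeast (lowRows B j' c) y') : y = y' ∨ y < j' :=
  (lt_or_ge y j').symm.imp_left fun h =>
    (hy.2 ⟨hj.trans hy'.1.1, hy'.1.2⟩).antisymm (hy'.2 ⟨h, hy.1.2⟩)

theorem IsPoly1D.prefixMin_of_isLeast_lowRows {m : ℕ} (hB : IsPoly1D B m)
    (hsep : ∀ y ∈ Icc (1 : ℝ) m, 0 ≤ B y) (hj : 1 ≤ j) (hym : y ≤ m)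
    (hy : IsLeast (lowRows B j c) y) : PrefixMin B j y := by
  have hjR : (1 : ℝ) ≤ j := by exact_mod_cast hj
  have hyR : (y : ℝ) ≤ m := by exact_mod_cast hym
  have hjy : (j : ℝ) ≤ y := Int.cast_le.2 hy.1.1
  have hmin : ∀ k ∈ Icc j y, B y ≤ B k := fun k hk => by
    by_contra! hlt
    have hky : k = y := hk.2.antisymm (hy.2 ⟨hk.1, hlt.le.trans hy.1.2⟩)
    exact hlt.ne (by rw [hky])
  refine ⟨hy.1.1, fun x hx => ?_⟩
  rw [abs_of_nonneg (hsep y ⟨hjR.trans hjy, hyR⟩),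
    abs_of_nonneg (hsep x ⟨hjR.trans hx.1, hx.2.trans hyR⟩)]
  exact hB.le_of_forall_int_le hj hym hmin hx

end LowRows

theorem exists_castSucc_and_not_succ {N : ℕ} (P : Fin (N + 1) → Prop) (h_zero : P 0)
    (h_last : ¬ P (Fin.last N)) : ∃ k : Fin N, P k.castSucc ∧ ¬ P k.succ := by
  by_contra! h
  exact h_last (Fin.induction (motive := P) h_zero h (Fin.last N))

namespace RectPath

variable {π : RectPath}

theorem IsRectilinear.monotone_vert (h : π.IsRectilinear) : Monotone π.vert :=
  Fin.monotone_iff_le_succ.2 fun k =>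
    (h k).elim (fun hv => ⟨hv.1.le, hv.2.le⟩) fun hh => ⟨hh.2.le, hh.1.le⟩

theorem IsRectilinear.segment_eq_Icc (h : π.IsRectilinear) (k : Fin π.N) :
    segment ℝ (π.vert k.castSucc) (π.vert k.succ) = Icc (π.vert k.castSucc) (π.vert k.succ) := by
  have hk := h k
  generalize π.vert k.castSucc = p, π.vert k.succ = q at hk
  obtain ⟨p₁, p₂⟩ := p
  obtain ⟨q₁, q₂⟩ := q
  rcases hk with ⟨rfl, hlt⟩ | ⟨rfl, hlt⟩
  · rw [← Prod.image_mk_segment_right, _root_.segment_eq_Icc hlt.le, ← Icc_prod_Icc, Icc_self,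
      singleton_prod]
  · rw [← Prod.image_mk_segment_left, _root_.segment_eq_Icc hlt.le, ← Icc_prod_Icc, Icc_self,
      prod_singleton]

theorem IsRectilinear.Icc_subset_image (h : π.IsRectilinear) (k : Fin π.N) :
    Icc (π.vert k.castSucc) (π.vert k.succ) ⊆ π.image := by
  rw [← h.segment_eq_Icc k]
  exact (subset_iUnion (fun k : Fin π.N => segment ℝ (π.vert k.castSucc) (π.vert k.succ)) k).trans
    (subset_insert _ _)

theorem vert_mem_image (k : Fin (π.N + 1)) : π.vert k ∈ π.image := by
  induction k using Fin.cases with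
  | zero => exact mem_insert _ _
  | succ k => exact Or.inr (mem_iUnion.2 ⟨k, right_mem_segment ℝ _ _⟩)

theorem IsRectilinear.image_subset_Icc (h : π.IsRectilinear) :
    π.image ⊆ Icc (π.vert 0) π.last := by
  refine insert_subset ⟨le_rfl, h.monotone_vert (Fin.le_last _)⟩ (iUnion_subset fun k => ?_)
  rw [h.segment_eq_Icc k]
  exact Icc_subset_Icc (h.monotone_vert (Fin.zero_le _)) (h.monotone_vert (Fin.le_last _))

theorem IsRectilinear.isChain_Icc (h : π.IsRectilinear) (k : Fin π.N) :
    IsChain (· ≤ ·) (Icc (π.vert k.castSucc) (π.vert k.succ)) := by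
  rintro ⟨p₁, p₂⟩ ⟨⟨hp₁, hp₂⟩, hp₁', hp₂'⟩ ⟨q₁, q₂⟩ ⟨⟨hq₁, hq₂⟩, hq₁', hq₂'⟩ -
  dsimp only at *
  rcases h k with ⟨heq, -⟩ | ⟨heq, -⟩
  · exact (le_total p₂ q₂).imp (fun hle => ⟨by dsimp only; linarith, hle⟩)
      fun hle => ⟨by dsimp only; linarith, hle⟩
  · exact (le_total p₁ q₁).imp (fun hle => ⟨hle, by dsimp only; linarith⟩)
      fun hle => ⟨hle, by dsimp only; linarith⟩

theorem IsRectilinear.isChain_image (h : π.IsRectilinear) : IsChain (· ≤ ·) π.image := by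
  refine IsChain.insert (fun p hp q hq hpq => ?_) fun q hq _ =>
    Or.inl (h.image_subset_Icc (Or.inr hq)).1
  simp only [h.segment_eq_Icc, mem_iUnion] at hp hq
  obtain ⟨k, hp⟩ := hp
  obtain ⟨l, hq⟩ := hq
  rcases lt_trichotomy k l with hkl | rfl | hkl
  · exact Or.inl (hp.2.trans ((h.monotone_vert (Fin.succ_le_castSucc_iff.2 hkl)).trans hq.1))
  · exact h.isChain_Icc k hp hq hpq
  · exact Or.inr (hq.2.trans ((h.monotone_vert (Fin.succ_le_castSucc_iff.2 hkl)).trans hp.1))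

theorem IsRectilinear.fst_le_of_snd_lt (h : π.IsRectilinear) {p q : ℝ × ℝ} (hp : p ∈ π.image)
    (hq : q ∈ π.image) (hpq : p.2 < q.2) : p.1 ≤ q.1 :=
  ((h.isChain_image.total hp hq).resolve_right fun hle => hpq.not_ge hle.2).1

theorem IsRectilinear.snd_le_of_fst_lt (h : π.IsRectilinear) {p q : ℝ × ℝ} (hp : p ∈ π.image)
    (hq : q ∈ π.image) (hpq : p.1 < q.1) : p.2 ≤ q.2 :=
  ((h.isChain_image.total hp hq).resolve_right fun hle => hpq.not_ge hle.1).2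

theorem IsRectilinear.exists_horizontal_edge (h : π.IsRectilinear) {u : ℝ}
    (hu : (π.vert 0).1 ≤ u) (hu' : u < π.last.1) :
    ∃ k : Fin π.N, (π.vert k.castSucc).2 = (π.vert k.succ).2 ∧
      (π.vert k.castSucc).1 ≤ u ∧ u < (π.vert k.succ).1 := by
  obtain ⟨k, hk, hk'⟩ :=
    exists_castSucc_and_not_succ (fun k => (π.vert k).1 ≤ u) hu hu'.not_ge
  rw [not_le] at hk'
  exact ⟨k, ((h k).resolve_left fun hv => (hk.trans_lt hk').ne hv.1).1, hk, hk'⟩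

theorem IsRectilinear.exists_vertical_edge (h : π.IsRectilinear) {v : ℝ}
    (hv : (π.vert 0).2 < v) (hv' : v ≤ π.last.2) :
    ∃ k : Fin π.N, (π.vert k.castSucc).1 = (π.vert k.succ).1 ∧
      (π.vert k.castSucc).2 < v ∧ v ≤ (π.vert k.succ).2 := by
  obtain ⟨k, hk, hk'⟩ :=
    exists_castSucc_and_not_succ (fun k => (π.vert k).2 < v) hv hv'.not_gt
  rw [not_lt] at hk'
  exact ⟨k, ((h k).resolve_right fun hh => (hk.trans_le hk').ne hh.1).1, hk, hk'⟩

end RectPath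

theorem InteriorDisjoint.symm {π π' : RectPath} (h : InteriorDisjoint π π') :
    InteriorDisjoint π' π :=
  fun p hp => (h p hp.symm).symm

theorem InteriorDisjoint.finite_inter {π π' : RectPath} (h : InteriorDisjoint π π') :
    (π.image ∩ π'.image).Finite := by
  refine (toFinite {π.vert 0, π.last, π'.vert 0, π'.last}).subset fun p hp => ?_
  simpa only [mem_insert_iff, mem_singleton_iff, or_assoc] using h p hp

theorem InteriorDisjoint.not_common_row {π π' : RectPath} (h : InteriorDisjoint π π') {u v y : ℝ}
    (huv : u < v) (hπ : Icc u v ×ˢ {y} ⊆ π.image) : ¬ Icc u v ×ˢ {y} ⊆ π'.image := fun hπ' =>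
  (Icc_infinite huv).prod_left (singleton_nonempty y) (h.finite_inter.subset (subset_inter hπ hπ'))

section Matchings

variable {n m : ℕ} {R B : ℝ → ℝ} {δ : ℝ} {s s' : ℤ × ℤ} {π π' : RectPath}

theorem mk_mem_freeSpace {x y : ℝ} : (x, y) ∈ freeSpace R B n m δ ↔
    x ∈ Icc (1 : ℝ) n ∧ y ∈ Icc (1 : ℝ) m ∧ B y - R x ≤ δ :=
  Iff.rfl

/-- `(i, j)` is an integer point of `π`, other than its endpoint, whose coordinates are both
prefix-minima from `s`: a point at which horizontal greediness dictates how `π` continues. -/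
structure IsDecisionPoint (R B : ℝ → ℝ) (s : ℤ × ℤ) (π : RectPath) (i j : ℤ) : Prop where
  mem_image : ((i : ℝ), (j : ℝ)) ∈ π.image
  prefixMin_fst : PrefixMin R s.1 i
  prefixMin_snd : PrefixMin B s.2 j
  last_ne : π.last ≠ ((i : ℝ), (j : ℝ))

namespace IsPMMatching

theorem isRectilinear (hπ : IsPMMatching R B n m δ s π) : π.IsRectilinear :=
  hπ.1

theorem image_subset_freeSpace (hπ : IsPMMatching R B n m δ s π) :
    π.image ⊆ freeSpace R B n m δ :=
  hπ.2.2.1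

theorem vert_zero (hπ : IsPMMatching R B n m δ s π) : π.vert 0 = ((s.1 : ℝ), (s.2 : ℝ)) :=
  hπ.2.1

theorem start_mem_freeSpace (hπ : IsPMMatching R B n m δ s π) :
    ((s.1 : ℝ), (s.2 : ℝ)) ∈ freeSpace R B n m δ :=
  hπ.vert_zero ▸ hπ.image_subset_freeSpace (RectPath.vert_mem_image 0)

theorem exists_vert_eq (hπ : IsPMMatching R B n m δ s π) (k : Fin (π.N + 1)) :
    ∃ i j : ℤ, π.vert k = ((i : ℝ), (j : ℝ)) ∧ PrefixMin R s.1 i ∧ PrefixMin B s.2 j :=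
  hπ.2.2.2 k

theorem le_last (hπ : IsPMMatching R B n m δ s π) {p : ℝ × ℝ} (hp : p ∈ π.image) :
    p ≤ π.last :=
  (hπ.isRectilinear.image_subset_Icc hp).2

theorem exists_decisionPoint_of_mem_vertLines (hπ : IsPMMatching R B n m δ s π) {a : ℤ}
    (ha : a ∈ vertLines π) :
    ∃ y₀ y₁ : ℤ, y₀ < y₁ ∧ IsDecisionPoint R B s π a y₀ ∧ ((a : ℝ), (y₁ : ℝ)) ∈ π.image := by
  obtain ⟨k, hka, hk⟩ := ha
  have hlt := ((hπ.isRectilinear k).resolve_right fun hh => hh.2.ne hk).2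
  obtain ⟨a₀, y₀, h₀, ha₀, hy₀⟩ := hπ.exists_vert_eq k.castSucc
  obtain ⟨a₁, y₁, h₁, -, -⟩ := hπ.exists_vert_eq k.succ
  have hmem₀ := h₀ ▸ π.vert_mem_image k.castSucc
  have hmem₁ := h₁ ▸ π.vert_mem_image k.succ
  simp only [h₀, h₁, Int.cast_inj, Int.cast_lt] at hka hk hlt
  subst a₀ a₁
  refine ⟨y₀, y₁, hlt, ⟨hmem₀, ha₀, hy₀, fun hlast => ?_⟩, hmem₁⟩
  exact (Int.cast_lt.2 hlt).not_ge (hlast ▸ hπ.le_last hmem₁).2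

theorem exists_decisionPoint_of_mem_horizLines (hπ : IsPMMatching R B n m δ s π) {j : ℤ}
    (hj : j ∈ horizLines π) :
    ∃ c d : ℤ, c < d ∧ IsDecisionPoint R B s π c j ∧ PrefixMin R s.1 d ∧
      Icc (c : ℝ) d ×ˢ {(j : ℝ)} ⊆ π.image := by
  obtain ⟨k, hkj, hk⟩ := hj
  have hlt := ((hπ.isRectilinear k).resolve_left fun hv => hv.2.ne hk).2
  obtain ⟨c, j₀, h₀, hc, hj₀⟩ := hπ.exists_vert_eq k.castSucc
  obtain ⟨d, j₁, h₁, hd, -⟩ := hπ.exists_vert_eq k.succ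
  have hrow := hπ.isRectilinear.Icc_subset_image k
  simp only [h₀, h₁, Int.cast_inj, Int.cast_lt] at hkj hk hlt hrow
  subst j₀ j₁
  rw [← Icc_prod_Icc, Icc_self] at hrow
  have hcd : (c : ℝ) < d := Int.cast_lt.2 hlt
  have hmem_c : ((c : ℝ), (j : ℝ)) ∈ π.image := hrow ⟨⟨le_rfl, hcd.le⟩, rfl⟩
  have hmem_d : ((d : ℝ), (j : ℝ)) ∈ π.image := hrow ⟨⟨hcd.le, le_rfl⟩, rfl⟩
  refine ⟨c, d, hlt, ⟨hmem_c, hc, hj₀, fun hlast => ?_⟩, hd, hrow⟩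
  exact hcd.not_ge (hlast ▸ hπ.le_last hmem_d).1

theorem exists_mem_column (hπ : IsPMMatching R B n m δ s π) {u : ℝ} (hu : s.1 ≤ u)
    (hu' : u < π.last.1) : ∃ r : ℤ, s.2 ≤ r ∧ (u, (r : ℝ)) ∈ π.image := by
  obtain ⟨k, hk, hku, hku'⟩ := hπ.isRectilinear.exists_horizontal_edge (hπ.vert_zero ▸ hu) hu'
  obtain ⟨c, r, hcr, -, hr⟩ := hπ.exists_vert_eq k.castSucc
  have hkr : (π.vert k.castSucc).2 = r := by rw [hcr]
  exact ⟨r, hr.1, hπ.isRectilinear.Icc_subset_image k ⟨⟨hku, hkr.le⟩, hku'.le, (hkr ▸ hk).le⟩⟩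

/-- The point `(x, w)` records that the path enters the row `v` from below along column `x`. -/
theorem exists_mem_row (hπ : IsPMMatching R B n m δ s π) {v : ℝ} (hv : s.2 < v)
    (hv' : v ≤ π.last.2) : ∃ x : ℤ, PrefixMin R s.1 x ∧ ((x : ℝ), v) ∈ π.image ∧
      ∃ w < v, ((x : ℝ), w) ∈ π.image := by
  obtain ⟨k, hk, hkv, hkv'⟩ := hπ.isRectilinear.exists_vertical_edge (hπ.vert_zero ▸ hv) hv'
  obtain ⟨x, w, hxw, hx, -⟩ := hπ.exists_vert_eq k.castSucc
  have hkx : (π.vert k.castSucc).1 = x := by rw [hxw]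
  exact ⟨x, hx, hπ.isRectilinear.Icc_subset_image k ⟨⟨hkx.le, hkv.le⟩, (hkx ▸ hk).le, hkv'⟩,
    _, hkv, hkx ▸ π.vert_mem_image k.castSucc⟩

theorem sub_le_of_mem_row (hπ : IsPMMatching R B n m δ s π)
    (hsepB : ∀ y ∈ Icc (1 : ℝ) m, 0 ≤ B y) {d : ℝ} {j : ℤ} (hj : PrefixMin B s.2 j)
    (hd : (d, (j : ℝ)) ∈ π.image) {u : ℝ} (hu : u ∈ Icc (s.1 : ℝ) d) : B j - R u ≤ δ := by
  obtain ⟨-, ⟨-, hjm⟩, hfree⟩ := mk_mem_freeSpace.1 (hπ.image_subset_freeSpace hd)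
  rcases hu.2.eq_or_lt with rfl | hud
  · exact hfree
  obtain ⟨k, hsk, hk⟩ := hπ.exists_mem_column hu.1 (hud.trans_le (hπ.le_last hd).1)
  have hkj : (k : ℝ) ≤ j := hπ.isRectilinear.snd_le_of_fst_lt hk hd hud
  have hBjk : B j ≤ B k := hj.le_of_nonneg
    (fun y hy => hsepB y ⟨hπ.start_mem_freeSpace.2.1.1.trans hy.1, hy.2.trans hjm⟩)
    ⟨Int.cast_le.2 hsk, hkj⟩
  linarith [(mk_mem_freeSpace.1 (hπ.image_subset_freeSpace hk)).2.2]

end IsPMMatching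

namespace IsHorizGreedy

theorem row_subset_image (hπ : IsHorizGreedy R B n m δ s π) {i j b : ℤ}
    (h : IsDecisionPoint R B s π i j) (hib : i < b) (hb : PrefixMin R s.1 b) (hbn : (b : ℝ) ≤ n)
    (hfree : ∀ x ∈ Icc (i : ℝ) b, B j - R x ≤ δ) : Icc (i : ℝ) b ×ˢ {(j : ℝ)} ⊆ π.image := by
  obtain ⟨⟨hi, -⟩, hj, -⟩ := mk_mem_freeSpace.1 (hπ.1.image_subset_freeSpace h.mem_image)
  refine (hπ.2 i j h.mem_image h.prefixMin_fst h.prefixMin_snd b hib hb ?_).resolve_right h.last_ne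
  rintro ⟨x, _⟩ ⟨hx, rfl⟩
  exact ⟨⟨hi.trans hx.1, hx.2.trans hbn⟩, hj, hfree x hx⟩

theorem exists_lt_of_mem_vertLines (hπ : IsHorizGreedy R B n m δ s π) {a b : ℤ}
    (ha : a ∈ vertLines π) (hab : a < b) (hb : PrefixMin R s.1 b) (hbn : (b : ℝ) ≤ n) :
    ∃ y₀ : ℤ, IsDecisionPoint R B s π a y₀ ∧ ∃ x ∈ Icc (a : ℝ) b, δ < B y₀ - R x := by
  obtain ⟨y₀, y₁, hy, h₀, h₁⟩ := hπ.1.exists_decisionPoint_of_mem_vertLines ha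
  have hab' : (a : ℝ) < b := Int.cast_lt.2 hab
  refine ⟨y₀, h₀, ?_⟩
  by_contra! hfree
  have hb₀ : ((b : ℝ), (y₀ : ℝ)) ∈ π.image :=
    hπ.row_subset_image h₀ hab hb hbn hfree ⟨⟨hab'.le, le_rfl⟩, rfl⟩
  exact hab'.not_ge (hπ.1.isRectilinear.fst_le_of_snd_lt hb₀ h₁ (Int.cast_lt.2 hy))

theorem exists_decisionPoint_of_isLeast_lowRows (hπ : IsHorizGreedy R B n m δ s π)
    (hB : IsPoly1D B m) (hsepB : ∀ y ∈ Icc (1 : ℝ) m, 0 ≤ B y) {a y₀ y r : ℤ} {z : ℝ}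
    (h₀ : IsDecisionPoint R B s π a y₀) (hy₀ : δ + R z < B y₀) (hr : (z, (r : ℝ)) ∈ π.image)
    (hyr : y ≤ r) (hy : IsLeast (lowRows B s.2 (δ + R z)) y) (hz : z < π.last.1) :
    ∃ x : ℤ, (x : ℝ) ∈ Icc (a : ℝ) z ∧ IsDecisionPoint R B s π x y := by
  obtain ⟨-, ⟨hs₂, -⟩, -⟩ := mk_mem_freeSpace.1 hπ.1.start_mem_freeSpace
  have hyr' : (y : ℝ) ≤ r := Int.cast_le.2 hyr
  have hrm : (r : ℝ) ≤ m := (hπ.1.image_subset_freeSpace hr).2.1.2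
  have hy₀m : (y₀ : ℝ) ≤ m := (hπ.1.image_subset_freeSpace h₀.mem_image).2.1.2
  have hy₀y : (y₀ : ℝ) < y := by
    by_contra! hle
    have := h₀.prefixMin_snd.le_of_nonneg
      (fun v hv => hsepB v ⟨hs₂.trans hv.1, hv.2.trans hy₀m⟩) ⟨Int.cast_le.2 hy.1.1, hle⟩
    exact hy₀.not_ge (this.trans hy.1.2)
  obtain ⟨x, hx, hxy, w, hwy, hxw⟩ := hπ.1.exists_mem_row
    ((Int.cast_le.2 h₀.prefixMin_snd.1).trans_lt hy₀y) (hyr'.trans (hπ.1.le_last hr).2)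
  have hxz : (x : ℝ) ≤ z := hπ.1.isRectilinear.fst_le_of_snd_lt hxw hr (hwy.trans_le hyr')
  refine ⟨x, ⟨hπ.1.isRectilinear.fst_le_of_snd_lt h₀.mem_image hxy hy₀y, hxz⟩, hxy, hx, ?_, ?_⟩
  · exact hB.prefixMin_of_isLeast_lowRows hsepB (by exact_mod_cast hs₂)
      (by exact_mod_cast hyr'.trans hrm) hy
  · exact fun hlast => hz.not_ge (hlast ▸ hxz)

theorem exists_isLeast_lowRows_row_subset_image (hπ : IsHorizGreedy R B n m δ s π)
    (hB : IsPoly1D B m) (hsepB : ∀ y ∈ Icc (1 : ℝ) m, 0 ≤ B y) {a b z : ℤ}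
    (ha : a ∈ vertLines π) (hb : b ∈ vertLines π) (hz : z ∈ Ico a b)
    (hmin : ∀ x ∈ Icc (a : ℝ) b, R z ≤ R x) :
    ∃ y, IsLeast (lowRows B s.2 (δ + R z)) y ∧ IsDecisionPoint R B s π b y ∧
      Icc (z : ℝ) b ×ˢ {(y : ℝ)} ⊆ π.image := by
  obtain ⟨w₀, w₁, hw, hbw₀, hbw₁⟩ := hπ.1.exists_decisionPoint_of_mem_vertLines hb
  have hbn : (b : ℝ) ≤ n := (hπ.1.image_subset_freeSpace hbw₀.mem_image).1.2
  have hzb : (z : ℝ) < b := Int.cast_lt.2 hz.2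
  have hzlast : (z : ℝ) < π.last.1 := hzb.trans_le (hπ.1.le_last hbw₀.mem_image).1
  obtain ⟨y₀, h₀, x₀, hx₀, hblocked⟩ :=
    hπ.exists_lt_of_mem_vertLines ha (hz.1.trans_lt hz.2) hbw₀.prefixMin_fst hbn
  obtain ⟨r, hsr, hr⟩ := hπ.1.exists_mem_column
    (Int.cast_le.2 (h₀.prefixMin_fst.1.trans hz.1)) hzlast
  have hr_low : r ∈ lowRows B s.2 (δ + R z) :=
    ⟨hsr, by linarith [(mk_mem_freeSpace.1 (hπ.1.image_subset_freeSpace hr)).2.2]⟩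
  obtain ⟨y, hy⟩ := exists_isLeast_lowRows ⟨r, hr_low⟩
  obtain ⟨x, ⟨hax, hxz⟩, hxy⟩ := hπ.exists_decisionPoint_of_isLeast_lowRows hB hsepB h₀
    (by linarith [hmin x₀ hx₀]) hr (hy.2 hr_low) hy hzlast
  have hrow : Icc (x : ℝ) b ×ˢ {(y : ℝ)} ⊆ π.image :=
    hπ.row_subset_image hxy (Int.cast_lt.1 (hxz.trans_lt hzb)) hbw₀.prefixMin_fst hbn
      fun u hu => by linarith [hmin u ⟨hax.trans hu.1, hu.2⟩, hy.1.2]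
  have hby : ((b : ℝ), (y : ℝ)) ∈ π.image := hrow ⟨⟨(hxz.trans_lt hzb).le, le_rfl⟩, rfl⟩
  have hyw₀ : (y : ℝ) ≤ w₀ := hπ.1.isRectilinear.snd_le_of_fst_lt hxy.mem_image hbw₀.mem_image
    (hxz.trans_lt hzb)
  refine ⟨y, hy, ⟨hby, hbw₀.prefixMin_fst, hxy.prefixMin_snd, fun hlast => ?_⟩,
    (prod_mono_left (Icc_subset_Icc_left hxz)).trans hrow⟩
  exact (hyw₀.trans_lt (Int.cast_lt.2 hw)).not_ge (hlast ▸ hπ.1.le_last hbw₁).2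

theorem exists_crossing_rows (hR : IsPoly1D R n) (hB : IsPoly1D B m)
    (hsepR : ∀ x ∈ Icc (1 : ℝ) n, R x ≤ 0) (hsepB : ∀ y ∈ Icc (1 : ℝ) m, 0 ≤ B y)
    (hπ : IsHorizGreedy R B n m δ s π) (hπ' : IsHorizGreedy R B n m δ s' π')
    (hdisj : InteriorDisjoint π π') (hs : s.2 ≤ s'.2) {a b : ℤ} (hab : a < b)
    (ha : a ∈ vertLines π ∩ vertLines π') (hb : b ∈ vertLines π ∩ vertLines π') :
    ∃ z ∈ Ico a b, ∃ y < s'.2, ((b : ℝ), (y : ℝ)) ∈ π.image ∧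
      ∃ y', IsLeast (lowRows B s'.2 (δ + R z)) y' ∧ IsDecisionPoint R B s' π' b y' := by
  obtain ⟨_, _, -, h₀, -⟩ := hπ.1.exists_decisionPoint_of_mem_vertLines ha.1
  obtain ⟨_, _, -, hw₀, -⟩ := hπ.1.exists_decisionPoint_of_mem_vertLines hb.1
  have hs₁ : (1 : ℝ) ≤ s.1 := hπ.1.start_mem_freeSpace.1.1
  have hsa : (s.1 : ℝ) ≤ a := Int.cast_le.2 h₀.prefixMin_fst.1
  have hbn : (b : ℝ) ≤ n := (hπ.1.image_subset_freeSpace hw₀.mem_image).1.2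
  have hRab : R a ≤ R b := hw₀.prefixMin_fst.le_of_nonpos
    (fun x hx => hsepR x ⟨hs₁.trans hx.1, hx.2.trans hbn⟩) ⟨hsa, (Int.cast_lt.2 hab).le⟩
  obtain ⟨z, hz, hmin⟩ := hR.exists_int_min (by exact_mod_cast hs₁.trans hsa)
    (by exact_mod_cast hbn) hab hRab
  obtain ⟨y, hy, hby, hrow⟩ :=
    hπ.exists_isLeast_lowRows_row_subset_image hB hsepB ha.1 hb.1 hz hmin
  obtain ⟨y', hy', hby', hrow'⟩ :=
    hπ'.exists_isLeast_lowRows_row_subset_image hB hsepB ha.2 hb.2 hz hmin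
  refine ⟨z, hz, y, ?_, hby.mem_image, y', hy', hby'⟩
  refine (eq_or_lt_of_isLeast_lowRows hs hy hy').resolve_left ?_
  rintro rfl
  exact hdisj.not_common_row (Int.cast_lt.2 hz.2) hrow hrow'

theorem not_interiorDisjoint_of_row (hπ : IsHorizGreedy R B n m δ s π)
    (hπ' : IsPMMatching R B n m δ s' π') (hsepB : ∀ y ∈ Icc (1 : ℝ) m, 0 ≤ B y) {t c d j : ℤ}
    (ht : IsDecisionPoint R B s π t j) (hst : s'.1 ≤ t) (htc : t ≤ c) (hcd : c < d)
    (hd : PrefixMin R s'.1 d) (hj : PrefixMin B s'.2 j)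
    (hrow : Icc (c : ℝ) d ×ˢ {(j : ℝ)} ⊆ π'.image) : ¬ InteriorDisjoint π π' := fun hdisj => by
  have hcd' : (c : ℝ) < d := Int.cast_lt.2 hcd
  have htc' : (t : ℝ) ≤ c := Int.cast_le.2 htc
  have hdj : ((d : ℝ), (j : ℝ)) ∈ π'.image := hrow ⟨⟨hcd'.le, le_rfl⟩, rfl⟩
  have hrow_π : Icc (t : ℝ) d ×ˢ {(j : ℝ)} ⊆ π.image :=
    hπ.row_subset_image ht (htc.trans_lt hcd)
      (ht.prefixMin_fst.trans hd hst (htc.trans hcd.le)) (hπ'.image_subset_freeSpace hdj).1.2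
      fun x hx => hπ'.sub_le_of_mem_row hsepB hj hdj ⟨(Int.cast_le.2 hst).trans hx.1, hx.2⟩
  exact hdisj.not_common_row hcd' ((prod_mono_left (Icc_subset_Icc_left htc')).trans hrow_π) hrow

theorem horizLines_inter_eq_empty_of_lt (hR : IsPoly1D R n) (hB : IsPoly1D B m)
    (hsepR : ∀ x ∈ Icc (1 : ℝ) n, R x ≤ 0) (hsepB : ∀ y ∈ Icc (1 : ℝ) m, 0 ≤ B y)
    (hπ : IsHorizGreedy R B n m δ s π) (hπ' : IsHorizGreedy R B n m δ s' π')
    (hdisj : InteriorDisjoint π π') (hs : s.2 ≤ s'.2) {a b : ℤ} (hab : a < b)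
    (ha : a ∈ vertLines π ∩ vertLines π') (hb : b ∈ vertLines π ∩ vertLines π') :
    horizLines π ∩ horizLines π' = ∅ := by
  refine eq_empty_of_forall_notMem fun j ⟨hj, hj'⟩ => ?_
  obtain ⟨c, d, hcd, hc, hd, hrow⟩ := hπ.1.exists_decisionPoint_of_mem_horizLines hj
  obtain ⟨c', d', hcd', hc', hd', hrow'⟩ := hπ'.1.exists_decisionPoint_of_mem_horizLines hj'
  obtain ⟨z, hz, y, hys', hby, y', hy', hby'⟩ :=
    exists_crossing_rows hR hB hsepR hsepB hπ hπ' hdisj hs hab ha hb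
  obtain ⟨_, _, -, hav, -⟩ := hπ.1.exists_decisionPoint_of_mem_vertLines ha.1
  have hsz : s.1 ≤ z := hav.prefixMin_fst.1.trans hz.1
  have hbc : b ≤ c := Int.cast_le.1 <| hπ.1.isRectilinear.fst_le_of_snd_lt hby hc.mem_image
    (Int.cast_lt.2 (hys'.trans_le hc'.prefixMin_snd.1))
  rcases lt_or_ge c' b with hcb' | hbc'
  · have hzc : z ≤ c := hz.2.le.trans hbc
    have hBj : B j - R z ≤ δ := hπ.1.sub_le_of_mem_row hsepB hc.prefixMin_snd hc.mem_image
      ⟨Int.cast_le.2 hsz, Int.cast_le.2 hzc⟩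
    have hjy' : j ≤ y' := Int.cast_le.1 <|
      hπ'.1.isRectilinear.snd_le_of_fst_lt hc'.mem_image hby'.mem_image (Int.cast_lt.2 hcb')
    have hy'j : y' = j := (hy'.2 ⟨hc'.prefixMin_snd.1, by linarith⟩).antisymm hjy'
    exact hπ'.not_interiorDisjoint_of_row hπ.1 hsepB (hy'j ▸ hby') (hsz.trans hz.2.le) hbc hcd hd
      hc.prefixMin_snd hrow hdisj.symm
  · rcases le_total c c' with hcc' | hcc'
    · exact hπ.not_interiorDisjoint_of_row hπ'.1 hsepB hc (hby'.prefixMin_fst.1.trans hbc) hcc'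
        hcd' hd' hc'.prefixMin_snd hrow' hdisj
    · exact hπ'.not_interiorDisjoint_of_row hπ.1 hsepB hc' (hsz.trans (hz.2.le.trans hbc')) hcc'
        hcd hd hc.prefixMin_snd hrow hdisj.symm

end IsHorizGreedy

end Matchings

theorem aligned_turns_general
    (n m : ℕ) (R B : ℝ → ℝ) (hR : IsPoly1D R n) (hB : IsPoly1D B m)
    (hsepR : ∀ x ∈ Icc (1 : ℝ) n, R x ≤ 0)
    (hsepB : ∀ y ∈ Icc (1 : ℝ) m, 0 ≤ B y)
    (δ : ℝ) (s s' : ℤ × ℤ) (π π' : RectPath)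
    (hπ : IsHorizGreedy R B n m δ s π) (hπ' : IsHorizGreedy R B n m δ s' π')
    (hdisj : InteriorDisjoint π π') :
    (vertLines π ∩ vertLines π').Subsingleton ∨ horizLines π ∩ horizLines π' = ∅ := by
  refine or_iff_not_imp_left.2 fun hV => ?_
  obtain ⟨a, ha, b, hb, hab⟩ := (not_subsingleton_iff.1 hV).exists_lt
  rcases le_total s.2 s'.2 with hs | hs
  · exact hπ.horizLines_inter_eq_empty_of_lt hR hB hsepR hsepB hπ' hdisj hs hab ha hb
  · rw [inter_comm]
    exact hπ'.horizLines_inter_eq_empty_of_lt hR hB hsepR hsepB hπ hdisj.symm hs hab ha.symm hb.symm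

/-- Two interior-disjoint horizontal-greedy `δ`-matchings share
at most one vertical line or at most one horizontal line:
`|C(π) ∩ C(π')| ≤ 1` or `|R(π) ∩ R(π')| ≤ 1`. -/
theorem aligned_turns
    (n m : ℕ) (hn : 1 ≤ n) (hm : 1 ≤ m)
    (R B : ℝ → ℝ) (hR : IsPoly1D R n) (hB : IsPoly1D B m)
    (hsepR : ∀ x ∈ Icc (1:ℝ) (n : ℝ), R x ≤ 0)
    (hsepB : ∀ y ∈ Icc (1:ℝ) (m : ℝ), 0 ≤ B y)
    (hgpR : GeneralPosition R n) (hgpB : GeneralPosition B m)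
    (δ : ℝ) (hδ : 0 ≤ δ)
    (s s' : ℤ × ℤ) (π π' : RectPath)
    (hπ : IsHorizGreedy R B n m δ s π) (hπ' : IsHorizGreedy R B n m δ s' π')
    (hdisj : InteriorDisjoint π π') :
    (vertLines π ∩ vertLines π').Subsingleton ∨
    (horizLines π ∩ horizLines π').Subsingleton := by
  refine (aligned_turns_general n m R B hR hB hsepR hsepB δ s s' π π' hπ hπ' hdisj).imp_right ?_
  exact fun h => h.symm ▸ subsingleton_empty
end
end

section
/- For any matching (f, g) between R and B there exist a parameter t ∈ [0,1] and a nonzero vector u ∈ ℝ² such that the line through R(f(t)) with normal u and the parallel line through B(g(t)) are tangent to P with P in the area between them; that is, for every p ∈ P one has ⟨u, B(g(t))⟩ ≤ ⟨u, p⟩ ≤ ⟨u, R(f(t))⟩. -/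
open Set
open scoped RealInnerProductSpace

noncomputable section

abbrev E2 := EuclideanSpace ℝ (Fin 2)

/-- A reparameterization: a nondecreasing surjection of `[0,1]` onto `[0,1]`. -/
def IsRepar (f : ℝ → ℝ) : Prop :=
  MonotoneOn f (Icc 0 1) ∧ MapsTo f (Icc 0 1) (Icc 0 1) ∧ SurjOn f (Icc 0 1) (Icc 0 1)

/-!
Cut the frontier of `P` at `x = R r` and `y = B b` into an initial and a terminal cap. For every
such cut at least one cap lies in a strip bounded by parallel lines through `x` and `y`, and if both
do, then a single strip contains both, hence `P`. To see this, let `n` be orthogonal to `x - y` and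
`w` support `P` at `x`, and look at the pencil of normals `w + σ • n`: on each cap the conditions
at `x` and at `y` are half-lines of values of `σ` pointing in opposite directions, and the
half-lines of the two caps are opposite as well.

That a given cap fits in a strip is a closed condition on `(r, b)`. The initial cap is a point at
`(0, 0)` and the terminal one at `(1, 1)`, so both conditions occur along any connected set of
parameters joining these corners, and by connectedness they occur simultaneously.
-/

section Repar

variable {f : ℝ → ℝ}

lemma IsRepar.continuousOn (hf : IsRepar f) : ContinuousOn f (Icc 0 1) := by
  obtain ⟨hmono, hmaps, hsurj⟩ := hf
  have hcont : Continuous hmaps.restrict := by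
    refine Monotone.continuous_of_surjective (fun s t hst => hmono s.2 t.2 hst) ?_
    exact hmaps.restrict_surjective_iff.2 hsurj
  exact continuousOn_iff_continuous_domRestrict.2 (continuous_subtype_val.comp hcont)

lemma IsRepar.map_zero (hf : IsRepar f) : f 0 = 0 := by
  have h0 : (0 : ℝ) ∈ Icc (0 : ℝ) 1 := left_mem_Icc.2 zero_le_one
  obtain ⟨t, ht, hft⟩ := hf.2.2 h0
  exact ((hf.1 h0 ht ht.1).trans_eq hft).antisymm (hf.2.1 h0).1

lemma IsRepar.map_one (hf : IsRepar f) : f 1 = 1 := by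
  have h1 : (1 : ℝ) ∈ Icc (0 : ℝ) 1 := right_mem_Icc.2 zero_le_one
  obtain ⟨t, ht, hft⟩ := hf.2.2 h1
  exact (hf.2.1 h1).2.antisymm (hft.symm.trans_le (hf.1 ht h1 ht.2))

end Repar

section Arc

variable {X : Type*} [TopologicalSpace X] {A B S : Set X} {x y z : X}

/-- `A` is a simple arc with endpoints `x` and `y`. The parameter interval may be a single point,
so that `{x}` is an arc from `x` to `x`. -/
def IsArc (A : Set X) (x y : X) : Prop :=
  ∃ (a b : ℝ) (γ : ℝ → X), a ≤ b ∧ ContinuousOn γ (Icc a b) ∧ InjOn γ (Icc a b) ∧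
    γ '' Icc a b = A ∧ γ a = x ∧ γ b = y

lemma isArc_image_Icc {γ : ℝ → X} {a b : ℝ} (hab : a ≤ b) (hγ : ContinuousOn γ (Icc a b))
    (hinj : InjOn γ (Icc a b)) : IsArc (γ '' Icc a b) (γ a) (γ b) :=
  ⟨a, b, γ, hab, hγ, hinj, rfl, rfl, rfl⟩

namespace IsArc

lemma left_mem (hA : IsArc A x y) : x ∈ A := by
  obtain ⟨a, b, γ, hab, -, -, rfl, rfl, -⟩ := hA
  exact mem_image_of_mem γ (left_mem_Icc.2 hab)

lemma symm (hA : IsArc A x y) : IsArc A y x := by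
  obtain ⟨a, b, γ, hab, hγ, hinj, rfl, rfl, rfl⟩ := hA
  have himage : Neg.neg '' Icc (-b) (-a) = Icc a b := by simp
  have hmaps : MapsTo Neg.neg (Icc (-b) (-a)) (Icc a b) := mapsTo_iff_image_subset.2 himage.subset
  refine ⟨-b, -a, γ ∘ Neg.neg, neg_le_neg hab, hγ.comp continuousOn_neg hmaps,
    hinj.comp neg_injective.injOn hmaps, ?_, by simp, by simp⟩
  rw [image_comp, himage]

lemma right_mem (hA : IsArc A x y) : y ∈ A := hA.symm.left_mem

lemma isClosed [T2Space X] (hA : IsArc A x y) : IsClosed A := by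
  obtain ⟨a, b, γ, -, hγ, -, rfl, -, -⟩ := hA
  exact (isCompact_Icc.image_of_continuousOn hγ).isClosed

lemma isPreconnected_sdiff_endpoints (hA : IsArc A x y) : IsPreconnected (A \ {x, y}) := by
  obtain ⟨a, b, γ, hab, hγ, hinj, rfl, rfl, rfl⟩ := hA
  have hends : {a, b} ⊆ Icc a b := pair_subset (left_mem_Icc.2 hab) (right_mem_Icc.2 hab)
  rw [← image_pair, ← hinj.image_sdiff_subset hends, Icc_sdiff_both]
  exact isPreconnected_Ioo.image γ (hγ.mono Ioo_subset_Icc_self)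

/- A point of the arc cuts it into two closed subarcs meeting only there, so a connected set
meeting both subarcs contains that point. -/
lemma subset_of_isPreconnected [T2Space X] (hA : IsArc A x y) (hS : IsPreconnected S)
    (hx : x ∈ S) (hy : y ∈ S) (hSA : S ⊆ A) : A ⊆ S := by
  obtain ⟨a, b, γ, -, hγ, hinj, rfl, rfl, rfl⟩ := hA
  rintro _ ⟨t, ht, rfl⟩
  have hleft : Icc a t ⊆ Icc a b := Icc_subset_Icc_right ht.2
  have hright : Icc t b ⊆ Icc a b := Icc_subset_Icc_left ht.1
  have hunion : γ '' Icc a t ∪ γ '' Icc t b = γ '' Icc a b := by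
    rw [← image_union, Icc_union_Icc_eq_Icc ht.1 ht.2]
  have hinter : γ '' Icc a t ∩ γ '' Icc t b = {γ t} := by
    rw [← hinj.image_inter hleft hright, Icc_inter_Icc_eq_singleton ht.1 ht.2, image_singleton]
  obtain ⟨p, hpS, hp⟩ := isPreconnected_closed_iff.1 hS _ _
    (isCompact_Icc.image_of_continuousOn (hγ.mono hleft)).isClosed
    (isCompact_Icc.image_of_continuousOn (hγ.mono hright)).isClosed (hSA.trans hunion.superset)
    ⟨γ a, hx, mem_image_of_mem γ (left_mem_Icc.2 ht.1)⟩
    ⟨γ b, hy, mem_image_of_mem γ (right_mem_Icc.2 ht.2)⟩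
  rw [hinter, mem_singleton_iff] at hp
  exact hp ▸ hpS

lemma exists_param (hA : IsArc A x y) (c : ℝ) :
    ∃ d, ∃ γ : ℝ → X, c ≤ d ∧ ContinuousOn γ (Icc c d) ∧ InjOn γ (Icc c d) ∧
      γ '' Icc c d = A ∧ γ c = x ∧ γ d = y := by
  obtain ⟨a, b, γ, hab, hγ, hinj, rfl, rfl, rfl⟩ := hA
  have himage : (· + (a - c)) '' Icc c (c + (b - a)) = Icc a b := by simp
  have hmaps : MapsTo (· + (a - c)) (Icc c (c + (b - a))) (Icc a b) :=
    mapsTo_iff_image_subset.2 himage.subset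
  refine ⟨c + (b - a), γ ∘ (· + (a - c)), by linarith, hγ.comp (by fun_prop) hmaps,
    hinj.comp (add_left_injective _).injOn hmaps, ?_, by simp, congrArg γ (by ring)⟩
  rw [image_comp, himage]

lemma union (hA : IsArc A x z) (hB : IsArc B z y) (hAB : A ∩ B ⊆ {z}) : IsArc (A ∪ B) x y := by
  obtain ⟨a, b, α, hab, hα, hαinj, rfl, rfl, rfl⟩ := hA
  obtain ⟨c, β, hbc, hβ, hβinj, rfl, hβb, rfl⟩ := hB.exists_param b
  let γ : ℝ → X := fun t => if t ≤ b then α t else β t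
  have hγα : EqOn γ α (Icc a b) := fun t ht => if_pos ht.2
  have hγβ' : EqOn γ β (Ioc b c) := fun t ht => if_neg ht.1.not_ge
  have hγβ : EqOn γ β (Icc b c) := by
    intro t ht
    obtain rfl | hbt := ht.1.eq_or_lt
    · rw [hβb, hγα (right_mem_Icc.2 hab)]
    · exact hγβ' ⟨hbt, ht.2⟩
  have hunion : Icc a c = Icc a b ∪ Icc b c := (Icc_union_Icc_eq_Icc hab hbc).symm
  refine ⟨a, c, γ, hab.trans hbc, ?_, ?_, ?_, hγα (left_mem_Icc.2 hab), hγβ (right_mem_Icc.2 hbc)⟩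
  · rw [hunion]
    exact (hα.congr hγα).union_of_isClosed (hβ.congr hγβ) isClosed_Icc isClosed_Icc
  · have hdisj : Disjoint (Icc a b) (Ioc b c) := disjoint_left.2 fun t h h' => h'.1.not_ge h.2
    rw [← Icc_union_Ioc_eq_Icc hab hbc, injOn_union hdisj]
    refine ⟨hαinj.congr hγα.symm, (hβinj.mono Ioc_subset_Icc_self).congr hγβ'.symm, ?_⟩
    intro s hs t ht hst
    rw [hγα hs, hγβ' ht] at hst
    have ht' := Ioc_subset_Icc_self ht
    have hz : α s = α b := hAB ⟨mem_image_of_mem α hs, hst ▸ mem_image_of_mem β ht'⟩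
    exact ht.1.ne (hβinj (left_mem_Icc.2 hbc) ht' (by rw [hβb, ← hst, hz]))
  · rw [hunion, image_union, hγα.image_eq, hγβ.image_eq]

end IsArc

end Arc

section ArcSegment

variable {E : Type*} [NormedAddCommGroup E] [NormedSpace ℝ E] {A C : Set E} {x y : E}

lemma IsArc.subset_segment_or_subset_segment (hA : IsArc A x y) (hC : IsArc C x y)
    (hAC : A ∩ C ⊆ {x, y}) (hxy : x ≠ y) (hseg : segment ℝ x y ⊆ A ∪ C) :
    A ⊆ segment ℝ x y ∨ C ⊆ segment ℝ x y := by
  have hdisj : openSegment ℝ x y ∩ (A ∩ C) = ∅ := by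
    refine eq_empty_of_forall_notMem fun p ⟨hp, hpAC⟩ => ?_
    obtain rfl | rfl := hAC hpAC
    exacts [hxy (left_mem_openSegment_iff.1 hp), hxy (right_mem_openSegment_iff.1 hp)]
  have hsub := isPreconnected_iff_subset_of_disjoint_closed.1
    (convex_openSegment x y).isPreconnected A C hA.isClosed hC.isClosed
    ((openSegment_subset_segment ℝ x y).trans hseg) hdisj
  have harc {S : Set E} (hS : IsArc S x y) (h : openSegment ℝ x y ⊆ S) : S ⊆ segment ℝ x y := by
    refine hS.subset_of_isPreconnected (convex_segment x y).isPreconnected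
      (left_mem_segment ℝ x y) (right_mem_segment ℝ x y) ?_
    rw [← closure_openSegment]
    exact hS.isClosed.closure_subset_iff.2 h
  exact hsub.imp (harc hA) (harc hC)

end ArcSegment

section Extremum

variable {α β : Type*} [Preorder β] {f : α → β} {s t : Set α} {a : α}

lemma isMaxOn_union : IsMaxOn f (s ∪ t) a ↔ IsMaxOn f s a ∧ IsMaxOn f t a :=
  union_subset_iff

lemma isMinOn_union : IsMinOn f (s ∪ t) a ↔ IsMinOn f s a ∧ IsMinOn f t a :=
  union_subset_iff

end Extremum

section Support

variable {E : Type*} [NormedAddCommGroup E] [InnerProductSpace ℝ E] {P : Set E} {x y z u : E}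

lemma isMaxOn_inner_neg : IsMaxOn (inner ℝ (-u)) P x ↔ IsMinOn (inner ℝ u) P x := by
  simp only [isMaxOn_iff, isMinOn_iff, inner_neg_left, neg_le_neg_iff]

lemma isMinOn_inner_neg : IsMinOn (inner ℝ (-u)) P x ↔ IsMaxOn (inner ℝ u) P x := by
  simp only [isMaxOn_iff, isMinOn_iff, inner_neg_left, neg_le_neg_iff]

lemma notMem_interior_of_isMaxOn_inner (hu : u ≠ 0) (hx : IsMaxOn (inner ℝ u) P x) :
    x ∉ interior P := by
  intro hxP
  have hlocal : IsLocalMax (innerSL ℝ u) x := hx.isLocalMax (mem_interior_iff_mem_nhds.1 hxP)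
  have hderiv : innerSL ℝ u = 0 := hlocal.hasFDerivAt_eq_zero (innerSL ℝ u).hasFDerivAt
  exact hu (inner_self_eq_zero.1 (DFunLike.congr_fun hderiv u))

lemma isMaxOn_of_isMaxOn_frontier (hP : IsCompact P) (hu : u ≠ 0)
    (hx : IsMaxOn (inner ℝ u) (frontier P) x) : IsMaxOn (inner ℝ u) P x := by
  refine isMaxOn_iff.2 fun p hp => ?_
  obtain ⟨q, hqP, hq⟩ := hP.exists_isMaxOn (f := inner ℝ u) ⟨p, hp⟩ (by fun_prop)
  have hqfrontier : q ∈ frontier P :=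
    ⟨subset_closure hqP, notMem_interior_of_isMaxOn_inner hu hq⟩
  exact (isMaxOn_iff.1 hq p hp).trans (isMaxOn_iff.1 hx q hqfrontier)

lemma exists_inner_eq_of_interior_eq_empty [FiniteDimensional ℝ E] (hP : Convex ℝ P)
    (hempty : interior P = ∅) (hx : x ∈ P) : ∃ u : E, u ≠ 0 ∧ ∀ p ∈ P, ⟪u, p⟫ = ⟪u, x⟫ := by
  have hspan : affineSpan ℝ P ≠ ⊤ := fun h =>
    (hP.interior_nonempty_iff_affineSpan_eq_top.2 h).ne_empty hempty
  have hxspan := subset_affineSpan ℝ P hx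
  have hdir : (affineSpan ℝ P).direction ≠ ⊤ :=
    fun h => hspan ((AffineSubspace.direction_eq_top_iff_of_nonempty ⟨x, hxspan⟩).1 h)
  obtain ⟨u, hu, hu0⟩ := Submodule.exists_mem_ne_zero_of_ne_bot
    (fun h => hdir (Submodule.orthogonal_eq_bot_iff.1 h))
  refine ⟨u, hu0, fun p hp => ?_⟩
  have hpx : p - x ∈ (affineSpan ℝ P).direction :=
    AffineSubspace.vsub_mem_direction (subset_affineSpan ℝ P hp) hxspan
  rw [← sub_eq_zero, ← inner_sub_right]
  exact (Submodule.mem_orthogonal' _ _).1 hu _ hpx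

lemma exists_isMaxOn_inner [FiniteDimensional ℝ E] (hP : Convex ℝ P) (hxP : x ∈ P)
    (hx : x ∉ interior P) : ∃ u : E, u ≠ 0 ∧ IsMaxOn (inner ℝ u) P x := by
  obtain hempty | hne := (interior P).eq_empty_or_nonempty
  · obtain ⟨u, hu, hconst⟩ := exists_inner_eq_of_interior_eq_empty hP hempty hxP
    exact ⟨u, hu, fun p hp => (hconst p hp).le⟩
  · obtain ⟨f, hf, hmax⟩ := geometric_hahn_banach_of_nonempty_interior_point hP hx hne
    refine ⟨(InnerProductSpace.toDual ℝ E).symm f, by simpa using hf, fun p hp => ?_⟩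
    simpa using hmax p hp

/-- `x` and `y` have a common supporting hyperplane: some face of `P` contains both. -/
def HasCommonSupport (P : Set E) (x y : E) : Prop :=
  ∃ w : E, w ≠ 0 ∧ IsMaxOn (inner ℝ w) P x ∧ IsMaxOn (inner ℝ w) P y

namespace HasCommonSupport

lemma symm (h : HasCommonSupport P x y) : HasCommonSupport P y x :=
  h.imp fun _ hw => ⟨hw.1, hw.2.2, hw.2.1⟩

lemma segment_subset_frontier (hconv : Convex ℝ P) (hx : x ∈ P) (hy : y ∈ P)
    (h : HasCommonSupport P x y) : segment ℝ x y ⊆ frontier P := by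
  obtain ⟨w, hw, hxmax, hymax⟩ := h
  intro p hp
  refine ⟨subset_closure (hconv.segment_subset hx hy hp),
    notMem_interior_of_isMaxOn_inner hw fun q hq => ?_⟩
  have hface : Convex ℝ {r | ⟪w, q⟫ ≤ ⟪w, r⟫} := convex_halfSpace_ge (innerSL ℝ w).isLinear _
  exact hface.segment_subset (hxmax hq) (hymax hq) hp

lemma of_isMaxOn_frontier (hP : IsCompact P) (hu : u ≠ 0) (huxy : ⟪u, x⟫ = ⟪u, y⟫)
    (hx : IsMaxOn (inner ℝ u) (frontier P) x) : HasCommonSupport P x y := by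
  have hmax := isMaxOn_of_isMaxOn_frontier hP hu hx
  exact ⟨u, hu, hmax, fun p hp => (hmax hp).trans huxy.le⟩

lemma of_isMinOn_frontier (hP : IsCompact P) (hu : u ≠ 0) (huxy : ⟪u, x⟫ = ⟪u, y⟫)
    (hx : IsMinOn (inner ℝ u) (frontier P) x) : HasCommonSupport P x y :=
  of_isMaxOn_frontier hP (neg_ne_zero.2 hu) (by simpa only [inner_neg_left, neg_inj] using huxy)
    (isMaxOn_inner_neg.2 hx)

end HasCommonSupport

lemma isMaxOn_inner_of_mem_openSegment (hx : x ∈ P) (hy : y ∈ P) (hz : z ∈ openSegment ℝ x y)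
    (hmax : IsMaxOn (inner ℝ u) P z) : IsMaxOn (inner ℝ u) P x := by
  obtain ⟨a, b, ha, hb, hab, rfl⟩ := hz
  have hxz : ⟪u, x⟫ ≤ ⟪u, a • x + b • y⟫ := hmax hx
  have hyz : ⟪u, y⟫ ≤ ⟪u, a • x + b • y⟫ := hmax hy
  have hle : ⟪u, a • x + b • y⟫ ≤ ⟪u, x⟫ := by
    simp only [inner_add_right, real_inner_smul_right] at hyz ⊢
    obtain rfl := eq_sub_of_add_eq hab
    nlinarith
  exact fun p hp => (hmax hp).trans hle

lemma exists_isMaxOn_inner_of_mem_openSegment [FiniteDimensional ℝ E] (hP : Convex ℝ P)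
    (hx : x ∈ P) (hy : y ∈ P) (hz : z ∈ openSegment ℝ x y) (hzP : z ∉ interior P) :
    ∃ u : E, u ≠ 0 ∧ IsMaxOn (inner ℝ u) P x ∧ IsMaxOn (inner ℝ u) P y ∧
      IsMaxOn (inner ℝ u) P z := by
  obtain ⟨u, hu, hmax⟩ := exists_isMaxOn_inner hP (hP.openSegment_subset hx hy hz) hzP
  exact ⟨u, hu, isMaxOn_inner_of_mem_openSegment hx hy hz hmax,
    isMaxOn_inner_of_mem_openSegment hy hx (openSegment_symm ℝ x y ▸ hz) hmax, hmax⟩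

lemma hasCommonSupport_of_collinear [FiniteDimensional ℝ E] (hP : IsClosed P)
    (hconv : Convex ℝ P) (hx : x ∈ frontier P) (hy : y ∈ frontier P) (hz : z ∈ frontier P)
    (hxy : x ≠ y) (hzx : z ≠ x) (hzy : z ≠ y) (hcol : Collinear ℝ {x, y, z}) :
    HasCommonSupport P x y := by
  have hsub := hP.frontier_subset
  have hsupp {a b c : E} (ha : a ∈ frontier P) (hb : b ∈ frontier P) (hc : c ∈ frontier P)
      (hac : a ≠ c) (hcb : c ≠ b) (h : Wbtw ℝ a c b) :=
    exists_isMaxOn_inner_of_mem_openSegment hconv (hsub ha) (hsub hb)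
      (mem_openSegment_of_ne_left_right hac hcb.symm h.mem_segment) hc.2
  obtain h | h | h := hcol.wbtw_or_wbtw_or_wbtw
  · obtain ⟨u, hu, hux, -, huy⟩ := hsupp hx hz hy hxy hzy.symm h
    exact ⟨u, hu, hux, huy⟩
  · obtain ⟨u, hu, huy, hux, -⟩ := hsupp hy hx hz hzy.symm hzx h
    exact ⟨u, hu, hux, huy⟩
  · obtain ⟨u, hu, -, huy, hux⟩ := hsupp hz hy hx hzx hxy h
    exact ⟨u, hu, hux, huy⟩

lemma exists_isMaxOn_inner_lt [FiniteDimensional ℝ E] (hP : Convex ℝ P) (hx : x ∈ P) (hy : y ∈ P)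
    (hxP : x ∉ interior P) (hsupp : ¬HasCommonSupport P x y) :
    ∃ u : E, IsMaxOn (inner ℝ u) P x ∧ ⟪u, y⟫ < ⟪u, x⟫ := by
  obtain ⟨u, hu, hmax⟩ := exists_isMaxOn_inner hP hx hxP
  refine ⟨u, hmax, (hmax hy).lt_of_ne fun huxy => hsupp ⟨u, hu, hmax, fun p hp => ?_⟩⟩
  exact (hmax hp).trans huxy.ge

end Support

section Strip

variable {E : Type*} [NormedAddCommGroup E] [InnerProductSpace ℝ E]
variable {A C S : Set E} {x y u v w n : E} {a b σ : ℝ}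

/-- The strip of normal `u` between the hyperplanes through `y` and through `x`. -/
def strip (u x y : E) : Set E := {p | ⟪u, y⟫ ≤ ⟪u, p⟫ ∧ ⟪u, p⟫ ≤ ⟪u, x⟫}

/-- `S` lies between two parallel hyperplanes through `x` and `y`. As in convex geometry, `(x, y)`
is then called an antipodal pair of `S`, but `x` and `y` need not belong to `S`. -/
def IsAntipodalPair (S : Set E) (x y : E) : Prop :=
  ∃ u : E, u ≠ 0 ∧ S ⊆ strip u x y

/-- At least one of `A` and `C` fits between parallel hyperplanes through `x` and `y`, and
if both do, then so does their union. -/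
def AntipodalDichotomy (A C : Set E) (x y : E) : Prop :=
  (IsAntipodalPair A x y ∨ IsAntipodalPair C x y) ∧
    (IsAntipodalPair A x y → IsAntipodalPair C x y → IsAntipodalPair (A ∪ C) x y)

lemma AntipodalDichotomy.symm (h : AntipodalDichotomy A C x y) : AntipodalDichotomy C A x y :=
  ⟨h.1.symm, fun hC hA => union_comm A C ▸ h.2 hA hC⟩

lemma subset_strip_iff : S ⊆ strip u x y ↔ IsMinOn (inner ℝ u) S y ∧ IsMaxOn (inner ℝ u) S x :=
  subset_inter_iff

lemma convex_strip (u x y : E) : Convex ℝ (strip u x y) :=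
  (convex_halfSpace_ge (innerSL ℝ u).isLinear _).inter
    (convex_halfSpace_le (innerSL ℝ u).isLinear _)

lemma strip_smul {c : ℝ} (hc : 0 < c) (u x y : E) : strip (c • u) x y = strip u x y := by
  ext p
  simp only [strip, real_inner_smul_left, mem_ofPred_eq, mul_le_mul_iff_right₀ hc]

lemma isAntipodalPair_singleton [Nontrivial E] (x : E) : IsAntipodalPair {x} x x := by
  obtain ⟨u, hu⟩ := exists_ne (0 : E)
  exact ⟨u, hu, singleton_subset_iff.2 ⟨le_rfl, le_rfl⟩⟩

lemma IsAntipodalPair.of_frontier {P : Set E} (hP : IsCompact P)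
    (h : IsAntipodalPair (frontier P) x y) : IsAntipodalPair P x y := by
  obtain ⟨u, hu, hstrip⟩ := h
  obtain ⟨hmin, hmax⟩ := subset_strip_iff.1 hstrip
  refine ⟨u, hu, subset_strip_iff.2 ⟨?_, isMaxOn_of_isMaxOn_frontier hP hu hmax⟩⟩
  rw [← isMaxOn_inner_neg] at hmin ⊢
  exact isMaxOn_of_isMaxOn_frontier hP (neg_ne_zero.2 hu) hmin

lemma segment_subset_strip (h : ⟪u, y⟫ ≤ ⟪u, x⟫) : segment ℝ x y ⊆ strip u x y :=
  (convex_strip u x y).segment_subset ⟨h, le_rfl⟩ ⟨le_rfl, h⟩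

lemma antipodalDichotomy_of_subset_segment (hw : w ≠ 0) (hwxy : ⟪w, x⟫ = ⟪w, y⟫)
    (hA : A ⊆ segment ℝ x y) (hC : C.Nonempty) : AntipodalDichotomy A C x y := by
  refine ⟨.inl ⟨w, hw, hA.trans (segment_subset_strip hwxy.ge)⟩, fun _ ⟨u, hu, hCu⟩ => ?_⟩
  obtain ⟨p, hp⟩ := hC
  have huxy : ⟪u, y⟫ ≤ ⟪u, x⟫ := (hCu hp).1.trans (hCu hp).2
  exact ⟨u, hu, union_subset (hA.trans (segment_subset_strip huxy)) hCu⟩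

lemma subset_strip_add_smul_of_isMaxOn (hxy : ⟪n, x⟫ = ⟪n, y⟫) (hn : IsMaxOn (inner ℝ n) S x)
    (hx : IsMaxOn (inner ℝ (w + a • n)) S x) (hy : IsMinOn (inner ℝ (w + b • n)) S y)
    (haσ : a ≤ σ) (hσb : σ ≤ b) : S ⊆ strip (w + σ • n) x y := by
  intro p hp
  have hnp : ⟪n, p⟫ ≤ ⟪n, x⟫ := hn hp
  have hxp : ⟪w + a • n, p⟫ ≤ ⟪w + a • n, x⟫ := hx hp
  have hyp : ⟪w + b • n, y⟫ ≤ ⟪w + b • n, p⟫ := hy hp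
  simp only [strip, mem_ofPred_eq, inner_add_left, real_inner_smul_left, ← hxy] at hxp hyp ⊢
  constructor <;> nlinarith

lemma subset_strip_add_smul_of_isMinOn (hxy : ⟪n, x⟫ = ⟪n, y⟫) (hn : IsMinOn (inner ℝ n) S x)
    (hx : IsMaxOn (inner ℝ (w + a • n)) S x) (hy : IsMinOn (inner ℝ (w + b • n)) S y)
    (hbσ : b ≤ σ) (hσa : σ ≤ a) : S ⊆ strip (w + σ • n) x y := by
  have hneg (c : ℝ) : w + (-c) • (-n) = w + c • n := by rw [neg_smul_neg]
  rw [← hneg] at hx hy ⊢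
  exact subset_strip_add_smul_of_isMaxOn (by simpa using hxy) (isMaxOn_inner_neg.2 hn) hx hy
    (neg_le_neg hσa) (neg_le_neg hbσ)

lemma isMaxOn_or_isMinOn_inner_of_isPreconnected_sdiff (hS : IsPreconnected (S \ {x, y}))
    (hxy : ⟪n, x⟫ = ⟪n, y⟫) (hne : ∀ p ∈ S \ {x, y}, ⟪n, p⟫ ≠ ⟪n, x⟫) :
    IsMaxOn (inner ℝ n) S x ∨ IsMinOn (inner ℝ n) S x := by
  by_contra! h
  simp only [isMaxOn_iff, isMinOn_iff, not_forall, not_le] at h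
  obtain ⟨⟨p, hpS, hp⟩, q, hqS, hq⟩ := h
  have hmem {r : E} (hr : r ∈ S) (hrx : ⟪n, r⟫ ≠ ⟪n, x⟫) : r ∈ S \ {x, y} :=
    ⟨hr, by rintro (rfl | rfl); exacts [hrx rfl, hrx hxy.symm]⟩
  obtain ⟨r, hr, hrx⟩ := hS.intermediate_value (hmem hqS hq.ne) (hmem hpS hp.ne')
    (f := inner ℝ n) (by fun_prop) ⟨hq.le, hp.le⟩
  exact hne r hr hrx

lemma exists_ne_zero_inner_eq (hE : 1 < Module.finrank ℝ E) (x y : E) :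
    ∃ n : E, n ≠ 0 ∧ ⟪n, x⟫ = ⟪n, y⟫ := by
  have : FiniteDimensional ℝ E := .of_finrank_pos (zero_lt_one.trans hE)
  have hker : (innerₛₗ ℝ (x - y)).ker ≠ ⊥ :=
    LinearMap.ker_ne_bot_of_finrank_lt (by rwa [Module.finrank_self])
  obtain ⟨n, hn, hn0⟩ := Submodule.exists_mem_ne_zero_of_ne_bot hker
  refine ⟨n, hn0, ?_⟩
  rwa [← sub_eq_zero, ← inner_sub_right, real_inner_comm]

end Strip

section Plane

variable {E : Type*} [NormedAddCommGroup E] [InnerProductSpace ℝ E]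
variable [Fact (Module.finrank ℝ E = 2)] {P A C S : Set E} {x y p n u w : E} {b : ℝ}

lemma collinear_of_inner_eq (hn : n ≠ 0) (hxy : x ≠ y) (hnxy : ⟪n, x⟫ = ⟪n, y⟫)
    (hnp : ⟪n, p⟫ = ⟪n, x⟫) : Collinear ℝ {x, y, p} := by
  have hp : p - x ∈ ℝ ∙ (y - x) :=
    Submodule.mem_span_singleton_of_inner_eq_zero_of_inner_eq_zero hn (sub_ne_zero.2 hxy.symm)
      (by rw [inner_sub_right, hnp, sub_self]) (by rw [inner_sub_right, hnxy, sub_self])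
  obtain ⟨c, hc⟩ := Submodule.mem_span_singleton.1 hp
  refine (collinear_iff_of_mem (mem_insert x _)).2 ⟨y - x, ?_⟩
  rintro _ (rfl | rfl | rfl)
  exacts [⟨0, by simp⟩, ⟨1, by simp⟩, ⟨c, by simp [hc]⟩]

/- Both `u` and `w` are positive on `x - y`, so a positive multiple of `u` differs from `w` by a
vector orthogonal to `x - y`. -/
lemma exists_smul_eq_add_smul (hn : n ≠ 0) (hnxy : ⟪n, x⟫ = ⟪n, y⟫)
    (hw : ⟪w, y⟫ < ⟪w, x⟫) (hu : ⟪u, y⟫ < ⟪u, x⟫) :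
    ∃ c σ : ℝ, 0 < c ∧ c • u = w + σ • n := by
  obtain ⟨c, hc, hcu⟩ : ∃ c : ℝ, 0 < c ∧ c * (⟪u, x⟫ - ⟪u, y⟫) = ⟪w, x⟫ - ⟪w, y⟫ :=
    ⟨_, div_pos (sub_pos.2 hw) (sub_pos.2 hu), div_mul_cancel₀ _ (sub_pos.2 hu).ne'⟩
  have hxy : x - y ≠ 0 := sub_ne_zero.2 (by rintro rfl; exact hw.false)
  have hspan : c • u - w ∈ ℝ ∙ n := by
    refine Submodule.mem_span_singleton_of_inner_eq_zero_of_inner_eq_zero hxy hn ?_ ?_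
    · rw [real_inner_comm, inner_sub_left, real_inner_smul_left, inner_sub_right, inner_sub_right,
        hcu, sub_self]
    · rw [real_inner_comm, inner_sub_right, hnxy, sub_self]
  obtain ⟨σ, hσ⟩ := Submodule.mem_span_singleton.1 hspan
  exact ⟨c, σ, hc, by rw [hσ, add_sub_cancel]⟩

lemma IsAntipodalPair.exists_subset_strip_add_smul (hn : n ≠ 0) (hnxy : ⟪n, x⟫ = ⟪n, y⟫)
    (hw : ⟪w, y⟫ < ⟪w, x⟫) (hp : p ∈ S) (hnp : ⟪n, p⟫ ≠ ⟪n, x⟫) (hS : IsAntipodalPair S x y) :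
    ∃ σ : ℝ, S ⊆ strip (w + σ • n) x y := by
  obtain ⟨u, hu, hstrip⟩ := hS
  obtain ⟨hyp, hpx⟩ := hstrip hp
  have hxy : x ≠ y := by rintro rfl; exact hw.false
  have huxy : ⟪u, y⟫ ≠ ⟪u, x⟫ := by
    intro huxy
    have hspan : p - x ∈ ℝ ∙ (x - y) := by
      refine Submodule.mem_span_singleton_of_inner_eq_zero_of_inner_eq_zero hu
        (sub_ne_zero.2 hxy) ?_ ?_
      · rw [inner_sub_right, sub_eq_zero]
        exact hpx.antisymm (huxy ▸ hyp)
      · rw [inner_sub_right, huxy, sub_self]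
    obtain ⟨c, hc⟩ := Submodule.mem_span_singleton.1 hspan
    refine hnp (sub_eq_zero.1 ?_)
    rw [← inner_sub_right, ← hc, real_inner_smul_right, inner_sub_right, hnxy, sub_self, mul_zero]
  obtain ⟨c, σ, hc, hσ⟩ := exists_smul_eq_add_smul hn hnxy hw ((hyp.trans hpx).lt_of_ne huxy)
  exact ⟨σ, by rwa [← hσ, strip_smul hc]⟩

/- Along the pencil `w + σ • n`, the strip condition for `A` at `x` holds from some parameter
onwards and at `y` up to some parameter; for `C` it is the other way round. -/
lemma antipodalDichotomy_of_pencil (hn : n ≠ 0) (hnxy : ⟪n, x⟫ = ⟪n, y⟫) (hwxy : ⟪w, y⟫ < ⟪w, x⟫)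
    (hx : IsMaxOn (inner ℝ w) (A ∪ C) x) (hy : IsMinOn (inner ℝ (w + b • n)) (A ∪ C) y)
    (hA : IsMaxOn (inner ℝ n) A x) (hC : IsMinOn (inner ℝ n) C x)
    (hA' : ∃ p ∈ A, ⟪n, p⟫ ≠ ⟪n, x⟫) (hC' : ∃ p ∈ C, ⟪n, p⟫ ≠ ⟪n, x⟫) :
    AntipodalDichotomy A C x y := by
  have hw (σ : ℝ) : w + σ • n ≠ 0 := by
    intro h
    have hlt : ⟪w + σ • n, y⟫ < ⟪w + σ • n, x⟫ := by
      simpa only [inner_add_left, real_inner_smul_left, hnxy, add_lt_add_iff_right] using hwxy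
    simp [h] at hlt
  have hx0 : IsMaxOn (inner ℝ (w + (0 : ℝ) • n)) (A ∪ C) x := by rwa [zero_smul, add_zero]
  have hxA := hx0.on_subset subset_union_left
  have hxC := hx0.on_subset subset_union_right
  have hyA := hy.on_subset subset_union_left
  have hyC := hy.on_subset subset_union_right
  constructor
  · obtain hb | hb := le_total 0 b
    · exact .inl ⟨_, hw 0, subset_strip_add_smul_of_isMaxOn hnxy hA hxA hyA le_rfl hb⟩
    · exact .inr ⟨_, hw 0, subset_strip_add_smul_of_isMinOn hnxy hC hxC hyC hb le_rfl⟩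
  · intro hantiA hantiC
    obtain ⟨p, hp, hnp⟩ := hA'
    obtain ⟨q, hq, hnq⟩ := hC'
    obtain ⟨α, hα⟩ := hantiA.exists_subset_strip_add_smul hn hnxy hwxy hp hnp
    obtain ⟨γ, hγ⟩ := hantiC.exists_subset_strip_add_smul hn hnxy hwxy hq hnq
    rw [subset_strip_iff] at hα hγ
    refine ⟨w + max (min 0 α) (min b γ) • n, hw _, union_subset ?_ ?_⟩
    · refine subset_strip_add_smul_of_isMaxOn hnxy hA
        (min_rec' (fun σ => IsMaxOn (inner ℝ (w + σ • n)) A x) hxA hα.2)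
        (max_rec' (fun σ => IsMinOn (inner ℝ (w + σ • n)) A y) hyA hα.1) (le_max_left _ _) ?_
      exact max_le (min_le_right _ _ |>.trans (le_max_right _ _))
        (min_le_left _ _ |>.trans (le_max_left _ _))
    · refine subset_strip_add_smul_of_isMinOn hnxy hC
        (max_rec' (fun σ => IsMaxOn (inner ℝ (w + σ • n)) C x) hxC hγ.2)
        (min_rec' (fun σ => IsMinOn (inner ℝ (w + σ • n)) C y) hyC hγ.1) (le_max_right _ _) ?_
      exact max_le (min_le_left _ _ |>.trans (le_max_left _ _))
        (min_le_right _ _ |>.trans (le_max_right _ _))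

lemma isMaxOn_or_isMinOn_inner_of_not_hasCommonSupport (hP : IsClosed P) (hconv : Convex ℝ P)
    (hx : x ∈ frontier P) (hy : y ∈ frontier P) (hxy : x ≠ y) (hsupp : ¬HasCommonSupport P x y)
    (hn : n ≠ 0) (hnxy : ⟪n, x⟫ = ⟪n, y⟫) (hSP : S ⊆ frontier P)
    (hS : IsPreconnected (S \ {x, y})) : IsMaxOn (inner ℝ n) S x ∨ IsMinOn (inner ℝ n) S x := by
  have : FiniteDimensional ℝ E := .of_fact_finrank_eq_two
  refine isMaxOn_or_isMinOn_inner_of_isPreconnected_sdiff hS hnxy fun p ⟨hpS, hp⟩ hnp => hsupp ?_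
  simp only [mem_insert_iff, mem_singleton_iff, not_or] at hp
  exact hasCommonSupport_of_collinear hP hconv hx hy (hSP hpS) hxy hp.1 hp.2
    (collinear_of_inner_eq hn hxy hnxy hnp)

lemma antipodalDichotomy_of_isMaxOn_of_isMinOn (hP : IsCompact P) (hconv : Convex ℝ P)
    (hx : x ∈ A ∪ C) (hy : y ∈ A ∪ C) (hAC : A ∪ C = frontier P) (hsupp : ¬HasCommonSupport P x y)
    (hn : n ≠ 0) (hnxy : ⟪n, x⟫ = ⟪n, y⟫) (hA : IsMaxOn (inner ℝ n) A x)
    (hC : IsMinOn (inner ℝ n) C x) : AntipodalDichotomy A C x y := by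
  have : FiniteDimensional ℝ E := .of_fact_finrank_eq_two
  have hACP : A ∪ C ⊆ P := hAC ▸ hP.isClosed.frontier_subset
  obtain ⟨w, hwx, hw⟩ := exists_isMaxOn_inner_lt hconv (hACP hx) (hACP hy) (hAC ▸ hx).2 hsupp
  obtain ⟨v, hvy, hv⟩ := exists_isMaxOn_inner_lt hconv (hACP hy) (hACP hx) (hAC ▸ hy).2
    fun h => hsupp h.symm
  obtain ⟨c, b, hc, hcb⟩ : ∃ c b : ℝ, 0 < c ∧ c • -v = w + b • n :=
    exists_smul_eq_add_smul hn hnxy hw (by simpa only [inner_neg_left, neg_lt_neg_iff] using hv)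
  have hwy : IsMinOn (inner ℝ (w + b • n)) P y := by
    rw [← hcb, ← neg_neg (c • -v), isMinOn_inner_neg, smul_neg, neg_neg, isMaxOn_iff]
    intro p hp
    simp only [real_inner_smul_left]
    exact mul_le_mul_of_nonneg_left (hvy hp) hc.le
  refine antipodalDichotomy_of_pencil hn hnxy hw (hwx.on_subset hACP) (hwy.on_subset hACP) hA hC
    ?_ ?_
  · by_contra! hconst
    have hmin : IsMinOn (inner ℝ n) (A ∪ C) x :=
      isMinOn_union.2 ⟨fun p hp => (hconst p hp).ge, hC⟩
    exact hsupp (.of_isMinOn_frontier hP hn hnxy (hAC ▸ hmin))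
  · by_contra! hconst
    have hmax : IsMaxOn (inner ℝ n) (A ∪ C) x :=
      isMaxOn_union.2 ⟨hA, fun p hp => (hconst p hp).le⟩
    exact hsupp (.of_isMaxOn_frontier hP hn hnxy (hAC ▸ hmax))

lemma antipodalDichotomy_of_not_hasCommonSupport (hP : IsCompact P) (hconv : Convex ℝ P)
    (hA : IsPreconnected (A \ {x, y})) (hC : IsPreconnected (C \ {x, y}))
    (hAC : A ∪ C = frontier P) (hx : x ∈ frontier P) (hy : y ∈ frontier P) (hxy : x ≠ y)
    (hsupp : ¬HasCommonSupport P x y) : AntipodalDichotomy A C x y := by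
  have hCA : C ∪ A = frontier P := union_comm C A ▸ hAC
  have hE : 1 < Module.finrank ℝ E := by simp [Fact.out (p := Module.finrank ℝ E = 2)]
  obtain ⟨n, hn, hnxy⟩ := exists_ne_zero_inner_eq hE x y
  have hside {S : Set E} (hSP : S ⊆ frontier P) (hS : IsPreconnected (S \ {x, y})) :=
    isMaxOn_or_isMinOn_inner_of_not_hasCommonSupport hP.isClosed hconv hx hy hxy hsupp hn hnxy hSP
      hS
  obtain hAmax | hAmin := hside (hAC ▸ subset_union_left) hA <;>
  obtain hCmax | hCmin := hside (hAC ▸ subset_union_right) hC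
  · exact (hsupp (.of_isMaxOn_frontier hP hn hnxy (hAC ▸ isMaxOn_union.2 ⟨hAmax, hCmax⟩))).elim
  · exact antipodalDichotomy_of_isMaxOn_of_isMinOn hP hconv (hAC ▸ hx) (hAC ▸ hy) hAC hsupp hn hnxy
      hAmax hCmin
  · exact (antipodalDichotomy_of_isMaxOn_of_isMinOn hP hconv (hCA ▸ hx) (hCA ▸ hy) hCA hsupp hn
      hnxy hCmax hAmin).symm
  · exact (hsupp (.of_isMinOn_frontier hP hn hnxy (hAC ▸ isMinOn_union.2 ⟨hAmin, hCmin⟩))).elim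

lemma antipodalDichotomy_of_isArc (hP : IsCompact P) (hconv : Convex ℝ P) (hA : IsArc A x y)
    (hC : IsArc C x y) (hAC : A ∪ C = frontier P) (hinter : A ∩ C ⊆ {x, y}) (hxy : x ≠ y) :
    AntipodalDichotomy A C x y := by
  have hx : x ∈ frontier P := hAC ▸ .inl hA.left_mem
  have hy : y ∈ frontier P := hAC ▸ .inl hA.right_mem
  have hsub := hP.isClosed.frontier_subset
  by_cases hsupp : HasCommonSupport P x y
  · have hseg := hsupp.segment_subset_frontier hconv (hsub hx) (hsub hy)
    obtain ⟨w, hw, hwx, hwy⟩ := hsupp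
    have hwxy : ⟪w, x⟫ = ⟪w, y⟫ := le_antisymm (hwy (hsub hx)) (hwx (hsub hy))
    obtain h | h := hA.subset_segment_or_subset_segment hC hinter hxy (hAC ▸ hseg)
    · exact antipodalDichotomy_of_subset_segment hw hwxy h ⟨x, hC.left_mem⟩
    · exact (antipodalDichotomy_of_subset_segment hw hwxy h ⟨x, hA.left_mem⟩).symm
  · exact antipodalDichotomy_of_not_hasCommonSupport hP hconv hA.isPreconnected_sdiff_endpoints
      hC.isPreconnected_sdiff_endpoints hAC hx hy hxy hsupp

end Plane

section Selections

variable {T T' X Y : Type*} [TopologicalSpace T] [TopologicalSpace T'] [TopologicalSpace X]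
variable [TopologicalSpace Y] {S S₁ S₂ : T → Set X} {Q : Set T}

/-- Through every point of every value `S t`, `t ∈ Q`, there passes a continuous selection of `S`
over `Q`: a strong form of lower semicontinuity of `S`. -/
def HasContinuousSelections (S : T → Set X) (Q : Set T) : Prop :=
  ∀ t ∈ Q, ∀ p ∈ S t, ∃ φ : T → X, φ t = p ∧ ContinuousOn φ Q ∧ ∀ t' ∈ Q, φ t' ∈ S t'

namespace HasContinuousSelections

lemma union (h₁ : HasContinuousSelections S₁ Q) (h₂ : HasContinuousSelections S₂ Q) :
    HasContinuousSelections (fun t => S₁ t ∪ S₂ t) Q := by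
  rintro t ht p (hp | hp)
  · obtain ⟨φ, hφt, hφ, hφS⟩ := h₁ t ht p hp
    exact ⟨φ, hφt, hφ, fun t' ht' => .inl (hφS t' ht')⟩
  · obtain ⟨φ, hφt, hφ, hφS⟩ := h₂ t ht p hp
    exact ⟨φ, hφt, hφ, fun t' ht' => .inr (hφS t' ht')⟩

lemma image (h : HasContinuousSelections S Q) {γ : X → Y} {D : Set X} (hγ : ContinuousOn γ D)
    (hSD : ∀ t ∈ Q, S t ⊆ D) : HasContinuousSelections (fun t => γ '' S t) Q := by
  rintro t ht _ ⟨p, hp, rfl⟩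
  obtain ⟨φ, rfl, hφ, hφS⟩ := h t ht p hp
  exact ⟨γ ∘ φ, rfl, hγ.comp hφ fun t' ht' => hSD t' ht' (hφS t' ht'),
    fun t' ht' => mem_image_of_mem γ (hφS t' ht')⟩

lemma comp (h : HasContinuousSelections S Q) {ψ : T' → T} {Q' : Set T'} (hψ : ContinuousOn ψ Q')
    (hmaps : MapsTo ψ Q' Q) : HasContinuousSelections (S ∘ ψ) Q' := by
  intro t ht p hp
  obtain ⟨φ, hφt, hφ, hφS⟩ := h (ψ t) (hmaps ht) p hp
  exact ⟨φ ∘ ψ, hφt, hφ.comp hψ hmaps, fun t' ht' => hφS (ψ t') (hmaps ht')⟩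

end HasContinuousSelections

lemma hasContinuousSelections_Icc_left (a : ℝ) :
    HasContinuousSelections (fun b => Icc a b) (Ici a) :=
  fun b _ s hs => ⟨(min s ·), min_eq_left hs.2, by fun_prop,
    fun _ hb' => ⟨le_min hs.1 hb', min_le_right _ _⟩⟩

lemma hasContinuousSelections_Icc_right (b : ℝ) :
    HasContinuousSelections (fun a => Icc a b) (Iic b) :=
  fun a _ s hs => ⟨(max s ·), max_eq_left hs.1, by fun_prop,
    fun _ ha' => ⟨le_max_right _ _, max_le hs.2 ha'⟩⟩

end Selections

section Closedness

variable {E : Type*} [NormedAddCommGroup E] [InnerProductSpace ℝ E]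

lemma isAntipodalPair_iff_exists_mem_sphere {S : Set E} {x y : E} :
    IsAntipodalPair S x y ↔ ∃ u ∈ Metric.sphere (0 : E) 1, S ⊆ strip u x y := by
  constructor
  · rintro ⟨u, hu, hS⟩
    exact ⟨‖u‖⁻¹ • u, by simp [norm_smul, hu], by rwa [strip_smul (by positivity)]⟩
  · rintro ⟨u, hu, hS⟩
    exact ⟨u, ne_zero_of_mem_unit_sphere ⟨u, hu⟩, hS⟩

/- The strip condition on `S t` is tested on continuous selections of `S`, for each of which it
is closed in `(t, u)`; projecting along the compact sphere of unit normals `u` keeps it closed. -/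
lemma isClosed_setOf_isAntipodalPair [FiniteDimensional ℝ E] {T : Type*} [TopologicalSpace T]
    [T2Space T] {Q : Set T} {S : T → Set E} {X Y : T → E} (hQ : IsCompact Q)
    (hX : ContinuousOn X Q) (hY : ContinuousOn Y Q) (hS : HasContinuousSelections S Q) :
    IsClosed {t | t ∈ Q ∧ IsAntipodalPair (S t) (X t) (Y t)} := by
  have : ProperSpace E := FiniteDimensional.proper ℝ E
  let D : Set (T × E) := Q ×ˢ Metric.sphere 0 1
  let selections : Set (T → E) := {φ | ContinuousOn φ Q ∧ ∀ t ∈ Q, φ t ∈ S t}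
  let tested (φ : T → E) : Set (T × E) := {q | q ∈ D ∧ φ q.1 ∈ strip q.2 (X q.1) (Y q.1)}
  have hD : IsCompact D := hQ.prod (isCompact_sphere 0 1)
  have hinner {Z : T → E} (hZ : ContinuousOn Z Q) :
      ContinuousOn (fun q : T × E => ⟪q.2, Z q.1⟫) D :=
    continuousOn_snd.inner (𝕜 := ℝ) (hZ.comp continuousOn_fst fun (q : T × E) hq => hq.1)
  have htested (φ) (hφ : φ ∈ selections) : IsClosed (tested φ) := by
    have hle := (hD.isClosed.isClosed_le (hinner hY) (hinner hφ.1)).inter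
      (hD.isClosed.isClosed_le (hinner hφ.1) (hinner hX))
    convert hle using 1
    exact sep_and
  have himage : {t | t ∈ Q ∧ IsAntipodalPair (S t) (X t) (Y t)} =
      Prod.fst '' (D ∩ ⋂ φ ∈ selections, tested φ) := by
    ext t
    simp only [isAntipodalPair_iff_exists_mem_sphere]
    constructor
    · rintro ⟨ht, u, hu, hstrip⟩
      refine ⟨(t, u), ⟨⟨ht, hu⟩, mem_iInter₂.2 fun φ hφ => ?_⟩, rfl⟩
      exact ⟨⟨ht, hu⟩, hstrip (hφ.2 t ht)⟩
    · rintro ⟨⟨t, u⟩, ⟨⟨ht, hu⟩, htest⟩, rfl⟩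
      refine ⟨ht, u, hu, fun p hp => ?_⟩
      obtain ⟨φ, rfl, hφ, hφS⟩ := hS t ht p hp
      exact (mem_iInter₂.1 htest φ ⟨hφ, hφS⟩).2
  rw [himage]
  exact ((hD.inter_right (isClosed_biInter htested)).image continuous_fst).isClosed

end Closedness

section BoundaryPair

variable {X : Type*} {R B : ℝ → X} {q : ℝ × ℝ}

/-- `R` and `B` are simple curves with common endpoints, otherwise disjoint, which together
trace the frontier of `P`. -/
structure IsBoundaryPair [TopologicalSpace X] (P : Set X) (R B : ℝ → X) : Prop where
  continuousOn_left : ContinuousOn R (Icc 0 1)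
  continuousOn_right : ContinuousOn B (Icc 0 1)
  injOn_left : InjOn R (Icc 0 1)
  injOn_right : InjOn B (Icc 0 1)
  start_eq : R 0 = B 0
  end_eq : R 1 = B 1
  union_eq : R '' Icc 0 1 ∪ B '' Icc 0 1 = frontier P
  inter_eq : R '' Icc 0 1 ∩ B '' Icc 0 1 = {R 0, R 1}

/-- The part of the curves `R` and `B` up to the parameters `q`. -/
def initialCap (R B : ℝ → X) (q : ℝ × ℝ) : Set X := R '' Icc 0 q.1 ∪ B '' Icc 0 q.2

/-- The part of the curves `R` and `B` from the parameters `q` onwards. -/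
def terminalCap (R B : ℝ → X) (q : ℝ × ℝ) : Set X := R '' Icc q.1 1 ∪ B '' Icc q.2 1

lemma initialCap_zero (h : R 0 = B 0) : initialCap R B (0, 0) = {R 0} := by
  simp [initialCap, h]

lemma terminalCap_one (h : R 1 = B 1) : terminalCap R B (1, 1) = {R 1} := by
  simp [terminalCap, h]

namespace IsBoundaryPair

variable [TopologicalSpace X] {P : Set X}

lemma initialCap_union_terminalCap (h : IsBoundaryPair P R B) (hq : q ∈ Icc 0 1 ×ˢ Icc 0 1) :
    initialCap R B q ∪ terminalCap R B q = frontier P := by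
  rw [initialCap, terminalCap, union_union_union_comm, ← image_union, ← image_union,
    Icc_union_Icc_eq_Icc hq.1.1 hq.1.2, Icc_union_Icc_eq_Icc hq.2.1 hq.2.2, h.union_eq]

lemma eq_zero_or_eq_one_of_apply_eq (h : IsBoundaryPair P R B) {s t : ℝ}
    (hs : s ∈ Icc 0 1) (ht : t ∈ Icc 0 1) (hst : R s = B t) : s = 0 ∧ t = 0 ∨ s = 1 ∧ t = 1 := by
  have h0 : (0 : ℝ) ∈ Icc 0 1 := left_mem_Icc.2 zero_le_one
  have h1 : (1 : ℝ) ∈ Icc 0 1 := right_mem_Icc.2 zero_le_one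
  have hmem : R s ∈ ({R 0, R 1} : Set X) :=
    h.inter_eq ▸ ⟨mem_image_of_mem R hs, hst ▸ mem_image_of_mem B ht⟩
  refine hmem.imp (fun hs0 => ⟨h.injOn_left hs h0 hs0, h.injOn_right ht h0 ?_⟩)
    (fun hs1 => ⟨h.injOn_left hs h1 hs1, h.injOn_right ht h1 ?_⟩)
  · rw [← hst, hs0, h.start_eq]
  · rw [← hst, hs1, h.end_eq]

lemma isArc_initialCap (h : IsBoundaryPair P R B) (hq : q ∈ Icc 0 1 ×ˢ Icc 0 1)
    (hne : R q.1 ≠ B q.2) : IsArc (initialCap R B q) (R q.1) (B q.2) := by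
  have hsub₁ : Icc 0 q.1 ⊆ Icc 0 1 := Icc_subset_Icc_right hq.1.2
  have hsub₂ : Icc 0 q.2 ⊆ Icc 0 1 := Icc_subset_Icc_right hq.2.2
  have hR := isArc_image_Icc hq.1.1 (h.continuousOn_left.mono hsub₁) (h.injOn_left.mono hsub₁)
  have hB := isArc_image_Icc hq.2.1 (h.continuousOn_right.mono hsub₂) (h.injOn_right.mono hsub₂)
  rw [← h.start_eq] at hB
  refine hR.symm.union hB ?_
  rintro _ ⟨⟨s, hs, rfl⟩, t, ht, hts⟩
  obtain ⟨rfl, -⟩ | ⟨rfl, rfl⟩ := h.eq_zero_or_eq_one_of_apply_eq (hsub₁ hs) (hsub₂ ht) hts.symm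
  · rfl
  · rw [hq.1.2.antisymm hs.2, hq.2.2.antisymm ht.2] at hne
    exact (hne h.end_eq).elim

lemma isArc_terminalCap (h : IsBoundaryPair P R B) (hq : q ∈ Icc 0 1 ×ˢ Icc 0 1)
    (hne : R q.1 ≠ B q.2) : IsArc (terminalCap R B q) (R q.1) (B q.2) := by
  have hsub₁ : Icc q.1 1 ⊆ Icc 0 1 := Icc_subset_Icc_left hq.1.1
  have hsub₂ : Icc q.2 1 ⊆ Icc 0 1 := Icc_subset_Icc_left hq.2.1
  have hR := isArc_image_Icc hq.1.2 (h.continuousOn_left.mono hsub₁) (h.injOn_left.mono hsub₁)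
  have hB := isArc_image_Icc hq.2.2 (h.continuousOn_right.mono hsub₂) (h.injOn_right.mono hsub₂)
  rw [← h.end_eq] at hB
  refine hR.union hB.symm ?_
  rintro _ ⟨⟨s, hs, rfl⟩, t, ht, hts⟩
  obtain ⟨rfl, rfl⟩ | ⟨rfl, -⟩ := h.eq_zero_or_eq_one_of_apply_eq (hsub₁ hs) (hsub₂ ht) hts.symm
  · rw [hs.1.antisymm hq.1.1, ht.1.antisymm hq.2.1] at hne
    exact (hne h.start_eq).elim
  · rfl

lemma initialCap_inter_terminalCap_subset (h : IsBoundaryPair P R B)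
    (hq : q ∈ Icc 0 1 ×ˢ Icc 0 1) :
    initialCap R B q ∩ terminalCap R B q ⊆ {R q.1, B q.2} := by
  have hinit₁ : Icc 0 q.1 ⊆ Icc 0 1 := Icc_subset_Icc_right hq.1.2
  have hinit₂ : Icc 0 q.2 ⊆ Icc 0 1 := Icc_subset_Icc_right hq.2.2
  have hterm₁ : Icc q.1 1 ⊆ Icc 0 1 := Icc_subset_Icc_left hq.1.1
  have hterm₂ : Icc q.2 1 ⊆ Icc 0 1 := Icc_subset_Icc_left hq.2.1
  rintro p ⟨⟨s, hs, rfl⟩ | ⟨s, hs, rfl⟩, ⟨t, ht, hts⟩ | ⟨t, ht, hts⟩⟩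
  · obtain rfl := h.injOn_left (hterm₁ ht) (hinit₁ hs) hts
    exact .inl (congrArg R (hs.2.antisymm ht.1))
  · obtain ⟨rfl, rfl⟩ | ⟨rfl, rfl⟩ :=
      h.eq_zero_or_eq_one_of_apply_eq (hinit₁ hs) (hterm₂ ht) hts.symm
    · exact .inr (hts.symm.trans (congrArg B (hq.2.1.antisymm ht.1)))
    · exact .inl (congrArg R (hs.2.antisymm hq.1.2))
  · obtain ⟨rfl, rfl⟩ | ⟨rfl, rfl⟩ := h.eq_zero_or_eq_one_of_apply_eq (hterm₁ ht) (hinit₂ hs) hts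
    · exact .inl (hts.symm.trans (congrArg R (hq.1.1.antisymm ht.1)))
    · exact .inr (congrArg B (hs.2.antisymm hq.2.2))
  · obtain rfl := h.injOn_right (hterm₂ ht) (hinit₂ hs) hts
    exact .inr (congrArg B (hs.2.antisymm ht.1))

end IsBoundaryPair

end BoundaryPair

section Sweep

variable {E : Type*} [NormedAddCommGroup E] [InnerProductSpace ℝ E]
variable {P C : Set E} {R B : ℝ → E} {x : E} {q : ℝ × ℝ}

lemma antipodalDichotomy_singleton [Nontrivial E] (hx : x ∈ C) :
    AntipodalDichotomy {x} C x x :=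
  ⟨.inl (isAntipodalPair_singleton x),
    fun _ hC => by rwa [union_eq_self_of_subset_left (singleton_subset_iff.2 hx)]⟩

lemma isClosed_setOf_isAntipodalPair_initialCap [FiniteDimensional ℝ E]
    (hR : ContinuousOn R (Icc 0 1)) (hB : ContinuousOn B (Icc 0 1)) :
    IsClosed {q : ℝ × ℝ | q ∈ Icc (0 : ℝ) 1 ×ˢ Icc (0 : ℝ) 1 ∧
      IsAntipodalPair (initialCap R B q) (R q.1) (B q.2)} := by
  have hsel := hasContinuousSelections_Icc_left 0
  refine isClosed_setOf_isAntipodalPair (isCompact_Icc.prod isCompact_Icc)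
    (hR.comp continuousOn_fst fun _ hq => hq.1) (hB.comp continuousOn_snd fun _ hq => hq.2) ?_
  exact ((hsel.comp continuousOn_fst fun _ hq => hq.1.1).image hR
      fun _ hq => Icc_subset_Icc_right hq.1.2).union
    ((hsel.comp continuousOn_snd fun _ hq => hq.2.1).image hB
      fun _ hq => Icc_subset_Icc_right hq.2.2)

lemma isClosed_setOf_isAntipodalPair_terminalCap [FiniteDimensional ℝ E]
    (hR : ContinuousOn R (Icc 0 1)) (hB : ContinuousOn B (Icc 0 1)) :
    IsClosed {q : ℝ × ℝ | q ∈ Icc (0 : ℝ) 1 ×ˢ Icc (0 : ℝ) 1 ∧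
      IsAntipodalPair (terminalCap R B q) (R q.1) (B q.2)} := by
  have hsel := hasContinuousSelections_Icc_right 1
  refine isClosed_setOf_isAntipodalPair (isCompact_Icc.prod isCompact_Icc)
    (hR.comp continuousOn_fst fun _ hq => hq.1) (hB.comp continuousOn_snd fun _ hq => hq.2) ?_
  exact ((hsel.comp continuousOn_fst fun _ hq => hq.1.2).image hR
      fun _ hq => Icc_subset_Icc_left hq.1.1).union
    ((hsel.comp continuousOn_snd fun _ hq => hq.2.2).image hB
      fun _ hq => Icc_subset_Icc_left hq.2.1)

variable [Fact (Module.finrank ℝ E = 2)]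

lemma IsBoundaryPair.antipodalDichotomy (h : IsBoundaryPair P R B)
    (hP : IsCompact P) (hconv : Convex ℝ P) (hq : q ∈ Icc 0 1 ×ˢ Icc 0 1) :
    AntipodalDichotomy (initialCap R B q) (terminalCap R B q) (R q.1) (B q.2) := by
  have : Nontrivial E := Module.nontrivial_of_finrank_eq_succ (R := ℝ) (n := 1) Fact.out
  by_cases hne : R q.1 = B q.2
  · obtain ⟨r, b⟩ := q
    obtain ⟨rfl, rfl⟩ | ⟨rfl, rfl⟩ := h.eq_zero_or_eq_one_of_apply_eq hq.1 hq.2 hne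
    · rw [initialCap_zero h.start_eq, ← hne]
      exact antipodalDichotomy_singleton (.inl (mem_image_of_mem R hq.1))
    · rw [terminalCap_one h.end_eq, ← hne]
      exact (antipodalDichotomy_singleton (.inl (mem_image_of_mem R hq.1))).symm
  · exact antipodalDichotomy_of_isArc hP hconv (h.isArc_initialCap hq hne)
      (h.isArc_terminalCap hq hne) (h.initialCap_union_terminalCap hq)
      (h.initialCap_inter_terminalCap_subset hq) hne

theorem exists_parallel_tangents_general (hP : IsCompact P) (hconv : Convex ℝ P)
    (h : IsBoundaryPair P R B) {K : Set (ℝ × ℝ)} (hK : IsPreconnected K)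
    (hKsub : K ⊆ Icc 0 1 ×ˢ Icc 0 1) (hstart : (0, 0) ∈ K) (hend : (1, 1) ∈ K) :
    ∃ q ∈ K, ∃ u : E, u ≠ 0 ∧ ∀ p ∈ P, ⟪u, B q.2⟫ ≤ ⟪u, p⟫ ∧ ⟪u, p⟫ ≤ ⟪u, R q.1⟫ := by
  have : FiniteDimensional ℝ E := .of_fact_finrank_eq_two
  have : Nontrivial E := Module.nontrivial_of_finrank_eq_succ (R := ℝ) (n := 1) Fact.out
  have hdich (q) (hq : q ∈ K) := h.antipodalDichotomy hP hconv (hKsub hq)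
  have hinit : IsAntipodalPair (initialCap R B (0, 0)) (R 0) (B 0) := by
    rw [initialCap_zero h.start_eq, ← h.start_eq]
    exact isAntipodalPair_singleton (R 0)
  have hterm : IsAntipodalPair (terminalCap R B (1, 1)) (R 1) (B 1) := by
    rw [terminalCap_one h.end_eq, ← h.end_eq]
    exact isAntipodalPair_singleton (R 1)
  obtain ⟨q, hq, ⟨-, hqinit⟩, -, hqterm⟩ := isPreconnected_closed_iff.1 hK _ _
    (isClosed_setOf_isAntipodalPair_initialCap h.continuousOn_left h.continuousOn_right)
    (isClosed_setOf_isAntipodalPair_terminalCap h.continuousOn_left h.continuousOn_right)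
    (fun q hq => (hdich q hq).1.imp (⟨hKsub hq, ·⟩) (⟨hKsub hq, ·⟩))
    ⟨_, hstart, hKsub hstart, hinit⟩ ⟨_, hend, hKsub hend, hterm⟩
  have hfrontier : IsAntipodalPair (frontier P) (R q.1) (B q.2) :=
    h.initialCap_union_terminalCap (hKsub hq) ▸ (hdich q hq).2 hqinit hqterm
  exact ⟨q, hq, hfrontier.of_frontier hP⟩

end Sweep

/-- For any matching `(f, g)` between curves `R` and `B` that
bound a compact convex set `P`, there is a time `t` and a direction `u ≠ 0` such
that the line through `R (f t)` with normal `u` and the parallel line through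
`B (g t)` are tangent to `P` with `P` between them. -/
theorem exists_parallel_tangents
    (P : Set E2) (hPc : IsCompact P) (hPconv : Convex ℝ P)
    (R B : ℝ → E2)
    (hRc : ContinuousOn R (Icc 0 1)) (hBc : ContinuousOn B (Icc 0 1))
    (hRinj : InjOn R (Icc 0 1)) (hBinj : InjOn B (Icc 0 1))
    (h0 : R 0 = B 0) (h1 : R 1 = B 1)
    (hbd : R '' Icc (0:ℝ) 1 ∪ B '' Icc (0:ℝ) 1 = frontier P)
    (hint : R '' Icc (0:ℝ) 1 ∩ B '' Icc (0:ℝ) 1 = {R 0, R 1})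
    (f g : ℝ → ℝ) (hf : IsRepar f) (hg : IsRepar g) :
    ∃ t ∈ Icc (0:ℝ) 1, ∃ u : E2, u ≠ 0 ∧
      ∀ p ∈ P, ⟪u, B (g t)⟫ ≤ ⟪u, p⟫ ∧ ⟪u, p⟫ ≤ ⟪u, R (f t)⟫ := by
  have : Fact (Module.finrank ℝ E2 = 2) := ⟨finrank_euclideanSpace_fin⟩
  have hK : IsPreconnected ((fun t => (f t, g t)) '' Icc 0 1) :=
    isPreconnected_Icc.image _ (hf.continuousOn.prodMk hg.continuousOn)
  obtain ⟨-, ⟨t, ht, rfl⟩, h⟩ := exists_parallel_tangents_general hPc hPconv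
    ⟨hRc, hBc, hRinj, hBinj, h0, h1, hbd, hint⟩ hK
    (image_subset_iff.2 fun t ht => ⟨hf.2.1 ht, hg.2.1 ht⟩)
    ⟨0, left_mem_Icc.2 zero_le_one, Prod.ext hf.map_zero hg.map_zero⟩
    ⟨1, right_mem_Icc.2 zero_le_one, Prod.ext hf.map_one hg.map_one⟩
  exact ⟨t, ht, h⟩
end
end
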